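/- arXiv:0912.2152 — 2 statements merged into one kernel-verified Lean document; each statement's English description precedes it below -/
import Mathlib

section
/- Let k be a field, d an odd integer with d ≥ 3, and m an integer with d+1 < m; set a = (d+1)/2, R = k[x_1,…,x_m], and M = R/(I_{a,2,m−1} + x_1x_m·I_{a−1,3,m−2}) (the Stanley–Reisner ring k[Δ(d,m)]). Then b_0(M) = 1, b_{m−d}(M) = 1, b_i(M) = 0 for i > m−d, and for every i with 1 ≤ i ≤ m−d−1, b_i(M) = η(d, m, i) + η(d, m, m−d−i). -/
/-- The variable `x_t` (1-indexed, for `1 ≤ t ≤ n`) of the polynomial ring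
`k[x_1, …, x_n]`, realized as `MvPolynomial (Fin n) k`. -/
noncomputable def Xv (k : Type*) [Field k] (n t : ℕ) : MvPolynomial (Fin n) k :=
  if h : 1 ≤ t ∧ t ≤ n then MvPolynomial.X ⟨t - 1, by omega⟩ else 0

/-- The ideal `I_{a,p,q}` of `k[x_1, …, x_n]`, generated by the squarefree monomials
`x_{t_1} ⋯ x_{t_a}` with `p ≤ t_1 < t_2 < ⋯ < t_a ≤ q` and `t_{j+1} ≥ t_j + 2`. -/
noncomputable def idealI (k : Type*) [Field k] (n a p q : ℕ) :
    Ideal (MvPolynomial (Fin n) k) :=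
  Ideal.span { f | ∃ t : ℕ → ℕ, p ≤ t 0 ∧ t (a - 1) ≤ q ∧
    (∀ j, j + 1 < a → t j + 2 ≤ t (j + 1)) ∧
    f = ∏ j ∈ Finset.range a, Xv k n (t j) }

open CategoryTheory

set_option synthInstance.maxHeartbeats 1000000
set_option maxHeartbeats 1000000

/-- The maximal homogeneous ideal `(x_1, …, x_n)` of `k[x_1, …, x_n]`. -/
noncomputable def maxIdl (k : Type) [Field k] (n : ℕ) : Ideal (MvPolynomial (Fin n) k) :=
  Ideal.span (Set.range MvPolynomial.X)

/-- The `i`-th (total) Betti number of a module `M` over `R = k[x_1, …, x_n]`, as a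
cardinal: the dimension over `k` of `Tor_i^R(R/(x_1,…,x_n), M)`, where
`R/(x_1,…,x_n)` is `k` regarded as an `R`-module via evaluation of every variable at `0`. -/
noncomputable def betti (k : Type) [Field k] (n : ℕ)
    (M : ModuleCat (MvPolynomial (Fin n) k)) (i : ℕ) : Cardinal :=
  Module.rank k (RestrictScalars k (MvPolynomial (Fin n) k)
    (((Tor (ModuleCat (MvPolynomial (Fin n) k)) i).obj
        (ModuleCat.of (MvPolynomial (Fin n) k)
          (MvPolynomial (Fin n) k ⧸ maxIdl k n))).obj M))

/-- `η(e,n,j) = C(n−⌊e/2⌋−2, ⌊e/2⌋+j)·C(⌊e/2⌋+j−1, ⌊e/2⌋)` for `1 ≤ j ≤ n−e−1`, and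
`η(e,n,j) = 0` for `j = 0` or `j ≥ n−e`. -/
def eta (e n j : ℕ) : ℕ :=
  if 1 ≤ j ∧ j ≤ n - e - 1 then
    Nat.choose (n - e / 2 - 2) (e / 2 + j) * Nat.choose (e / 2 + j - 1) (e / 2)
  else 0

/-!
Betti numbers over `R = k[x_1, …, x_n]` are computed as lengths of `Ext^i(-, κ)`, where `κ = R ⧸
𝔪`; over the field `κ` the functors `Tor_i(κ, -)` and `Ext^i(-, κ)` are dual.

All modules in sight are monomial subquotients `I_U ⧸ (I_U ∩ I_V)`, so short exact sequences are
obtained by adjoining one monomial, or all multiples of one variable, at a time. There are two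
ways to see that the Betti numbers of a short exact sequence add up. Either one of its maps,
composed with a suitable map between the modules, is multiplication by an element of `𝔪`, which
kills `Ext(-, κ)`. Or the kernel `N` is linear, in the sense that `Ext(N, κ)` is generated in
degree zero over the Yoneda algebra `Ext(κ, κ)`, and `Hom(-, κ)` is already exact on the
sequence.

The ideal `I_{a,p,q}` satisfies a recursion in `q` that gives linearity and its Betti numbers.
Since `x_1 x_m W ≅ W` for the subquotient `W = I_{a-1,3,m-2} ⧸ (I_{a-1,3,m-2} ∩ I_{a,2,m-1})`,
there is a short exact sequence `0 → W → R ⧸ I_{a,2,m-1} → M → 0` whose first map is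
multiplication by `x_1 x_m`. The Betti numbers of `W` follow by induction on `m`, peeling a
variable off either end.
-/

universe u

namespace CyclicBetti

/-! ### Vector spaces over the residue field -/

section ResidueDuality

theorem length_dual {K V : Type*} [Field K] [AddCommGroup V] [Module K V] :
    Module.length K (Module.Dual K V) = Module.length K V := by
  by_cases hV : Module.Finite K V
  · rw [Module.length_eq_finrank, Module.length_eq_finrank, Subspace.dual_finrank_eq]
  · have hV' : ¬ Module.Finite K (Module.Dual K V) := mt (Module.finite_dual_iff K).mp hV
    rw [← Module.rank_lt_aleph0_iff, not_lt] at hV hV'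
    rw [Module.length_eq_rank, Module.length_eq_rank, Cardinal.toENat_eq_top.mpr hV,
      Cardinal.toENat_eq_top.mpr hV']

variable {R : Type u} [CommRing R] {𝔪 : Ideal R} {A B V : Type*}
  [AddCommGroup A] [Module R A] [AddCommGroup B] [Module R B] [AddCommGroup V] [Module R V]

theorem isTorsionBySet_of_linearEquiv {s : Set R} (e : A ≃ₗ[R] B)
    (hB : Module.IsTorsionBySet R B s) : Module.IsTorsionBySet R A s := fun x r =>
  e.injective (by rw [map_smul, map_zero, @hB (e x) r])

theorem smul_quotient_eq_zero {x : R} (hx : x ∈ 𝔪) (y : R ⧸ 𝔪) : x • y = 0 := by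
  obtain ⟨r, rfl⟩ := Ideal.Quotient.mk_surjective y
  exact Ideal.Quotient.eq_zero_iff_mem.mpr (𝔪.mul_mem_right r hx)

theorem isTorsionBySet_quotient_tensor :
    Module.IsTorsionBySet R (TensorProduct R (R ⧸ 𝔪) A) 𝔪 := fun y x => by
  induction y with
  | zero => exact smul_zero _
  | tmul y a =>
    rw [TensorProduct.smul_tmul', smul_quotient_eq_zero x.2, TensorProduct.zero_tmul]
  | add y z hy hz => rw [smul_add, hy, hz, add_zero]

theorem length_functionals [𝔪.IsMaximal] (hV : Module.IsTorsionBySet R V 𝔪) :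
    Module.length R (V →ₗ[R] R ⧸ 𝔪) = Module.length R V := by
  let _ := Ideal.Quotient.field 𝔪
  let _ : Module (R ⧸ 𝔪) V := hV.module
  have hsurj : Function.Surjective (algebraMap R (R ⧸ 𝔪)) := Ideal.Quotient.mk_surjective
  rw [(LinearMap.extendScalarsOfSurjectiveEquiv (M := V) (N := R ⧸ 𝔪) hsurj).length_eq,
    Module.length_eq_of_surjective hsurj, Module.length_eq_of_surjective (M := V) hsurj]
  exact length_dual

theorem isSemisimpleModule_of_isTorsionBySet [𝔪.IsMaximal] (hV : Module.IsTorsionBySet R V 𝔪) :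
    IsSemisimpleModule R V :=
  let _ := Ideal.Quotient.field 𝔪
  hV.isSemisimpleModule_iff.mp inferInstance

end ResidueDuality

/-! ### Ext into the residue field -/

section ResidueExt

variable {R : Type u} [CommRing R] (𝔪 : Ideal R)

/-- The group `Ext^i(M, R ⧸ 𝔪)`; its length is the `i`-th Betti number of `M` when `R` is
polynomial and `𝔪` is the ideal of the variables. -/
abbrev ResidueExt (i : ℕ) (M : Type u) [AddCommGroup M] [Module R M] : Type u :=
  Abelian.Ext (ModuleCat.of R M) (ModuleCat.of R (R ⧸ 𝔪)) i

variable {M A B C : Type u} [AddCommGroup M] [Module R M]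
  [AddCommGroup A] [Module R A] [AddCommGroup B] [Module R B] [AddCommGroup C] [Module R C]

/-- The map `f^* : Ext^i(B, R ⧸ 𝔪) → Ext^i(A, R ⧸ 𝔪)` induced by `f : A → B`. -/
noncomputable def extPullback (i : ℕ) (f : A →ₗ[R] B) : ResidueExt 𝔪 i B →ₗ[R] ResidueExt 𝔪 i A :=
  (Abelian.Ext.mk₀ (ModuleCat.ofHom f)).precompOfLinear R _ (zero_add i)

theorem extPullback_apply (i : ℕ) (f : A →ₗ[R] B) (e : ResidueExt 𝔪 i B) :
    extPullback 𝔪 i f e = (Abelian.Ext.mk₀ (ModuleCat.ofHom f)).comp e (zero_add i) :=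
  rfl

theorem extPullback_comp (i : ℕ) (g : B →ₗ[R] C) (f : A →ₗ[R] B) :
    extPullback 𝔪 i (g ∘ₗ f) = extPullback 𝔪 i f ∘ₗ extPullback 𝔪 i g := by
  ext e
  simp only [LinearMap.comp_apply, extPullback_apply, Abelian.Ext.mk₀_comp_mk₀_assoc,
    ModuleCat.ofHom_comp]

theorem extPullback_id (i : ℕ) : extPullback 𝔪 i (LinearMap.id : M →ₗ[R] M) = LinearMap.id :=
  LinearMap.ext fun e => Abelian.Ext.mk₀_id_comp e

theorem extPullback_smul (i : ℕ) (r : R) (f : A →ₗ[R] B) :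
    extPullback 𝔪 i (r • f) = r • extPullback 𝔪 i f := by
  ext e
  change (Abelian.Ext.mk₀ (r • ModuleCat.ofHom f)).comp e (zero_add i) = r • extPullback 𝔪 i f e
  rw [Abelian.Ext.mk₀_smul, Abelian.Ext.smul_comp, extPullback_apply]

theorem extPullback_zero (i : ℕ) : extPullback 𝔪 i (0 : A →ₗ[R] B) = 0 := by
  simpa only [zero_smul] using extPullback_smul 𝔪 i 0 (0 : A →ₗ[R] B)

/-- `f^*` as a linear equivalence when `f` is one. -/
noncomputable def extCongr (i : ℕ) (f : A ≃ₗ[R] B) : ResidueExt 𝔪 i B ≃ₗ[R] ResidueExt 𝔪 i A :=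
  LinearEquiv.ofLinearMap (extPullback 𝔪 i f.toLinearMap) (extPullback 𝔪 i f.symm.toLinearMap)
    (by rw [← extPullback_comp, LinearEquiv.symm_comp, extPullback_id])
    (by rw [← extPullback_comp, LinearEquiv.comp_symm, extPullback_id])

variable {𝔪} in
theorem smul_residueExt_eq_zero {i : ℕ} {r : R} (hr : r ∈ 𝔪) (e : ResidueExt 𝔪 i M) :
    r • e = 0 := by
  have hid : r • 𝟙 (ModuleCat.of R (R ⧸ 𝔪)) = 0 := by
    ext
    exact Ideal.Quotient.eq_zero_iff_mem.mpr (𝔪.mul_mem_right _ hr)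
  rw [Abelian.Ext.smul_eq_comp_mk₀ (R := R) e r, hid, Abelian.Ext.mk₀_zero, Abelian.Ext.comp_zero]

variable {𝔪} in
theorem extPullback_smul_eq_zero (i : ℕ) {r : R} (hr : r ∈ 𝔪) (f : A →ₗ[R] B) :
    extPullback 𝔪 i (r • f) = 0 := by
  ext e
  rw [extPullback_smul]
  exact smul_residueExt_eq_zero hr _

/-- `Ext⁰(M, R ⧸ 𝔪)` is the space of functionals `M → R ⧸ 𝔪`. -/
noncomputable def residueExtZeroEquiv : ResidueExt 𝔪 0 M ≃ₗ[R] (M →ₗ[R] R ⧸ 𝔪) :=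
  (Abelian.Ext.linearEquiv₀ (R := R)).trans ModuleCat.homLinearEquiv

theorem extPullback_zero_symm_id (φ : M →ₗ[R] R ⧸ 𝔪) :
    extPullback 𝔪 0 φ ((residueExtZeroEquiv 𝔪).symm LinearMap.id) =
      (residueExtZeroEquiv 𝔪).symm φ := by
  change (Abelian.Ext.mk₀ (ModuleCat.ofHom φ)).comp (Abelian.Ext.mk₀ (𝟙 _)) (zero_add 0) =
    Abelian.Ext.mk₀ (ModuleCat.ofHom φ)
  simp only [Abelian.Ext.comp_mk₀_id]

end ResidueExt

section ShortExact

variable {R : Type u} [CommRing R] {A B C A' B' C' : Type u}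
  [AddCommGroup A] [Module R A] [AddCommGroup B] [Module R B] [AddCommGroup C] [Module R C]
  [AddCommGroup A'] [Module R A'] [AddCommGroup B'] [Module R B'] [AddCommGroup C'] [Module R C']

/-- `0 → A → B → C → 0` is exact, for unbundled modules. -/
structure IsShortExact (f : A →ₗ[R] B) (g : B →ₗ[R] C) : Prop where
  injective : Function.Injective f
  exact : Function.Exact f g
  surjective : Function.Surjective g

namespace IsShortExact

variable {f : A →ₗ[R] B} {g : B →ₗ[R] C} {f' : A' →ₗ[R] B'} {g' : B' →ₗ[R] C'}

theorem shortExact (h : IsShortExact f g) :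
    (ShortComplex.mk (ModuleCat.ofHom f) (ModuleCat.ofHom g)
      (ModuleCat.hom_ext h.exact.linearMap_comp_eq_zero)).ShortExact where
  exact := (ShortComplex.ShortExact.moduleCat_exact_iff_function_exact _).mpr h.exact
  mono_f := (ModuleCat.mono_iff_injective _).mpr h.injective
  epi_g := (ModuleCat.epi_iff_surjective _).mpr h.surjective

/-- The connecting map `Ext^i(A, R ⧸ 𝔪) → Ext^{i+1}(C, R ⧸ 𝔪)`. -/
noncomputable def connecting (h : IsShortExact f g) (𝔪 : Ideal R) (i : ℕ) :
    ResidueExt 𝔪 i A →ₗ[R] ResidueExt 𝔪 (i + 1) C :=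
  h.shortExact.extClass.precompOfLinear R _ (add_comm 1 i)

theorem connecting_apply (h : IsShortExact f g) (𝔪 : Ideal R) (i : ℕ) (e : ResidueExt 𝔪 i A) :
    h.connecting 𝔪 i e = h.shortExact.extClass.comp e (add_comm 1 i) :=
  rfl

theorem exact_extPullback_connecting (h : IsShortExact f g) (𝔪 : Ideal R) (i : ℕ) :
    Function.Exact (extPullback 𝔪 i f) (h.connecting 𝔪 i) := fun x =>
  ⟨fun hx => Abelian.Ext.contravariant_sequence_exact₁ h.shortExact _ x (add_comm 1 i) hx, by
    rintro ⟨y, rfl⟩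
    exact h.shortExact.extClass_comp_assoc y (h := add_comm 1 i)⟩

theorem exact_extPullback (h : IsShortExact f g) (𝔪 : Ideal R) (i : ℕ) :
    Function.Exact (extPullback 𝔪 i g) (extPullback 𝔪 i f) := fun x =>
  ⟨fun hx => Abelian.Ext.contravariant_sequence_exact₂ h.shortExact _ x hx, by
    rintro ⟨y, rfl⟩
    rw [← LinearMap.comp_apply, ← extPullback_comp, h.exact.linearMap_comp_eq_zero,
      extPullback_zero, LinearMap.zero_apply]⟩

theorem exact_connecting_extPullback (h : IsShortExact f g) (𝔪 : Ideal R) (i : ℕ) :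
    Function.Exact (h.connecting 𝔪 i) (extPullback 𝔪 (i + 1) g) := fun x =>
  ⟨fun hx => Abelian.Ext.contravariant_sequence_exact₃ h.shortExact _ x hx (add_comm 1 i), by
    rintro ⟨y, rfl⟩
    exact h.shortExact.comp_extClass_assoc y (add_comm 1 i)⟩

theorem extPullback_zero_injective (h : IsShortExact f g) (𝔪 : Ideal R) :
    Function.Injective (extPullback 𝔪 0 g) :=
  have := h.shortExact.epi_g
  Abelian.Ext.precomp_mk₀_injective_of_epi _ (ModuleCat.ofHom g)

theorem connecting_extPullback (h : IsShortExact f g) (h' : IsShortExact f' g')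
    {α : A →ₗ[R] A'} {β : B →ₗ[R] B'} {γ : C →ₗ[R] C'}
    (hβ : β ∘ₗ f = f' ∘ₗ α) (hγ : γ ∘ₗ g = g' ∘ₗ β) (𝔪 : Ideal R) (i : ℕ)
    (e : ResidueExt 𝔪 i A') :
    h.connecting 𝔪 i (extPullback 𝔪 i α e) =
      extPullback 𝔪 (i + 1) γ (h'.connecting 𝔪 i e) := by
  have natural := ShortComplex.ShortExact.extClass_naturality h.shortExact h'.shortExact
    { τ₁ := ModuleCat.ofHom α
      τ₂ := ModuleCat.ofHom β
      τ₃ := ModuleCat.ofHom γ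
      comm₁₂ := ModuleCat.hom_ext hβ.symm
      comm₂₃ := ModuleCat.hom_ext hγ.symm }
  rw [extPullback_apply, extPullback_apply, connecting_apply, connecting_apply,
    ← Abelian.Ext.comp_assoc (a₁₂ := 1) _ _ _ (by lia) (by lia) (by lia), natural,
    ← Abelian.Ext.comp_assoc (a₁₂ := 1) _ _ _ (by lia) (by lia) (by lia)]

end IsShortExact

end ShortExact

section Linear

variable {R : Type u} [CommRing R] (𝔪 : Ideal R)

/-- The span of the classes `φ^* e ∈ Ext^i(M, R ⧸ 𝔪)` with `φ : M → R ⧸ 𝔪` and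
`e ∈ Ext^i(R ⧸ 𝔪, R ⧸ 𝔪)`, that is, the part generated in degree `0` over the Yoneda algebra. -/
noncomputable def linearPart (i : ℕ) (M : Type u) [AddCommGroup M] [Module R M] :
    Submodule R (ResidueExt 𝔪 i M) :=
  ⨆ φ : M →ₗ[R] R ⧸ 𝔪, LinearMap.range (extPullback 𝔪 i φ)

/-- `Ext^i(M, R ⧸ 𝔪)` is generated in degree `0` over the Yoneda algebra. For all `i` together
this is a form of linearity of the minimal resolution of `M` that needs no grading. -/
def IsLinearAt (i : ℕ) (M : Type u) [AddCommGroup M] [Module R M] : Prop :=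
  linearPart 𝔪 i M = ⊤

variable {A B C : Type u} [AddCommGroup A] [Module R A] [AddCommGroup B] [Module R B]
  [AddCommGroup C] [Module R C] {f : A →ₗ[R] B} {g : B →ₗ[R] C} {𝔪} {i : ℕ}

theorem extPullback_functional_mem_linearPart (φ : A →ₗ[R] R ⧸ 𝔪) (e : ResidueExt 𝔪 i (R ⧸ 𝔪)) :
    extPullback 𝔪 i φ e ∈ linearPart 𝔪 i A :=
  Submodule.mem_iSup_of_mem φ ⟨e, rfl⟩

theorem linearPart_le_iff {P : Submodule R (ResidueExt 𝔪 i A)} :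
    linearPart 𝔪 i A ≤ P ↔ ∀ (φ : A →ₗ[R] R ⧸ 𝔪) e, extPullback 𝔪 i φ e ∈ P := by
  simp only [linearPart, iSup_le_iff, LinearMap.range_le_iff_comap, Submodule.eq_top_iff',
    Submodule.mem_comap]

theorem extPullback_mem_linearPart {e : ResidueExt 𝔪 i B} (he : e ∈ linearPart 𝔪 i B) :
    extPullback 𝔪 i f e ∈ linearPart 𝔪 i A := by
  suffices linearPart 𝔪 i B ≤ (linearPart 𝔪 i A).comap (extPullback 𝔪 i f) from this he
  refine linearPart_le_iff.mpr fun φ e => ?_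
  rw [Submodule.mem_comap, ← LinearMap.comp_apply, ← extPullback_comp]
  exact extPullback_functional_mem_linearPart _ e

theorem exists_mem_linearPart_extPullback_eq (hf : Function.Surjective (f.lcomp R (R ⧸ 𝔪)))
    {e : ResidueExt 𝔪 i A} (he : e ∈ linearPart 𝔪 i A) :
    ∃ b ∈ linearPart 𝔪 i B, extPullback 𝔪 i f b = e := by
  suffices linearPart 𝔪 i A ≤ (linearPart 𝔪 i B).map (extPullback 𝔪 i f) from this he
  refine linearPart_le_iff.mpr fun φ e => ?_
  obtain ⟨ψ, rfl⟩ := hf φ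
  refine ⟨_, extPullback_functional_mem_linearPart ψ e, ?_⟩
  rw [← LinearMap.comp_apply, ← extPullback_comp, LinearMap.lcomp_apply']

theorem lcomp_surjective_of_mem_smul_top [𝔪.IsMaximal]
    (hf : ∀ a, f a ∈ 𝔪 • (⊤ : Submodule R B) → a ∈ 𝔪 • (⊤ : Submodule R A)) :
    Function.Surjective (f.lcomp R (R ⧸ 𝔪)) := fun φ => by
  have := isSemisimpleModule_of_isTorsionBySet (Module.isTorsionBySet_quotient_ideal_smul B 𝔪)
  let f' := (𝔪 • (⊤ : Submodule R A)).mapQ (𝔪 • (⊤ : Submodule R B)) f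
    (Submodule.smul_top_le_comap_smul_top 𝔪 f)
  have hf' : Function.Injective f' := (injective_iff_map_eq_zero _).mpr fun x hx => by
    obtain ⟨a, rfl⟩ := Submodule.mkQ_surjective _ x
    exact (Submodule.Quotient.mk_eq_zero _).mpr (hf a ((Submodule.Quotient.mk_eq_zero _).mp hx))
  have hφ : 𝔪 • (⊤ : Submodule R A) ≤ LinearMap.ker φ :=
    Submodule.smul_le.mpr fun x hx a _ => by
      rw [LinearMap.mem_ker, map_smul, smul_quotient_eq_zero hx]
  obtain ⟨ψ, hψ⟩ := IsSemisimpleModule.extension_property f' hf' (Submodule.liftQ _ φ hφ)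
  refine ⟨ψ ∘ₗ Submodule.mkQ _, ?_⟩
  exact LinearMap.ext fun a => LinearMap.congr_fun hψ (Submodule.mkQ _ a)

theorem IsLinearAt.mem (hA : IsLinearAt 𝔪 i A) (e : ResidueExt 𝔪 i A) : e ∈ linearPart 𝔪 i A :=
  hA.symm ▸ Submodule.mem_top

theorem isLinearAt_zero : IsLinearAt 𝔪 0 A := by
  refine eq_top_iff.mpr fun e _ => ?_
  rw [← (residueExtZeroEquiv 𝔪).symm_apply_apply e, ← extPullback_zero_symm_id]
  exact extPullback_functional_mem_linearPart _ _

theorem subsingleton_residueExt [Subsingleton A] : Subsingleton (ResidueExt 𝔪 i A) := by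
  refine subsingleton_of_forall_eq 0 fun e => ?_
  rw [← LinearMap.id_apply (R := R) e, ← extPullback_id, Subsingleton.elim LinearMap.id 0,
    extPullback_zero, LinearMap.zero_apply]

theorem isLinearAt_of_subsingleton_ext [Subsingleton (ResidueExt 𝔪 i A)] : IsLinearAt 𝔪 i A :=
  Subsingleton.elim _ _

theorem IsLinearAt.of_surjective (hC : IsLinearAt 𝔪 i C)
    (hg : Function.Surjective (extPullback 𝔪 i g)) : IsLinearAt 𝔪 i B := by
  refine eq_top_iff.mpr fun e _ => ?_
  obtain ⟨c, rfl⟩ := hg e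
  exact extPullback_mem_linearPart (hC.mem c)

theorem IsLinearAt.congr (hA : IsLinearAt 𝔪 i A) (e : A ≃ₗ[R] B) : IsLinearAt 𝔪 i B :=
  hA.of_surjective (extCongr 𝔪 i e.symm).surjective

theorem IsLinearAt.extPullback_surjective (hA : IsLinearAt 𝔪 i A)
    (hf : Function.Surjective (f.lcomp R (R ⧸ 𝔪))) : Function.Surjective (extPullback 𝔪 i f) :=
  fun e => (exists_mem_linearPart_extPullback_eq hf (hA.mem e)).imp fun _ h => h.2

theorem IsLinearAt.of_isShortExact (hA : IsLinearAt 𝔪 i A) (hC : IsLinearAt 𝔪 i C)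
    (h : IsShortExact f g) (hf : Function.Surjective (f.lcomp R (R ⧸ 𝔪))) :
    IsLinearAt 𝔪 i B := by
  refine eq_top_iff.mpr fun e _ => ?_
  obtain ⟨b, hb, hbe⟩ := exists_mem_linearPart_extPullback_eq hf (hA.mem (extPullback 𝔪 i f e))
  obtain ⟨c, hc⟩ := (h.exact_extPullback 𝔪 i (e - b)).mp (by rw [map_sub, hbe, sub_self])
  rw [← sub_add_cancel e b, ← hc]
  exact add_mem (extPullback_mem_linearPart (hC.mem c)) hb

theorem IsLinearAt.of_connecting (hA : IsLinearAt 𝔪 i A) (hB : IsLinearAt 𝔪 (i + 1) B)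
    (h : IsShortExact f g) (hg : Function.Surjective (g.lcomp R (R ⧸ 𝔪)))
    (hδ : ∀ (φ : A →ₗ[R] R ⧸ 𝔪) e,
      h.connecting 𝔪 i (extPullback 𝔪 i φ e) ∈ linearPart 𝔪 (i + 1) C) :
    IsLinearAt 𝔪 (i + 1) C := by
  refine eq_top_iff.mpr fun e _ => ?_
  obtain ⟨c, hc, hce⟩ :=
    exists_mem_linearPart_extPullback_eq hg (hB.mem (extPullback 𝔪 (i + 1) g e))
  obtain ⟨a, ha⟩ :=
    (h.exact_connecting_extPullback 𝔪 i (e - c)).mp (by rw [map_sub, hce, sub_self])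
  rw [← sub_add_cancel e c, ← ha]
  exact add_mem (linearPart_le_iff (P := (linearPart 𝔪 (i + 1) C).comap _).mpr hδ (hA.mem a)) hc

/-- Under these hypotheses the pushout of `0 → A → B → C → 0` along `φ` is the pullback along `γ`
of a self-extension of `R ⧸ 𝔪`, namely of `B ⧸ ker ψ`. -/
theorem IsShortExact.connecting_extPullback_mem_linearPart (h : IsShortExact f g)
    {φ : A →ₗ[R] R ⧸ 𝔪} (hφ : Function.Surjective φ)
    {γ : C →ₗ[R] R ⧸ 𝔪} (hγ : Function.Surjective γ)
    {ψ : LinearMap.ker (γ ∘ₗ g) →ₗ[R] R ⧸ 𝔪}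
    (hψ : ∀ a (b : LinearMap.ker (γ ∘ₗ g)), (b : B) = f a → ψ b = φ a)
    (e : ResidueExt 𝔪 i (R ⧸ 𝔪)) :
    h.connecting 𝔪 i (extPullback 𝔪 i φ e) ∈ linearPart 𝔪 (i + 1) C := by
  let K := LinearMap.ker φ
  let D : Submodule R B := (LinearMap.ker ψ).map (LinearMap.ker (γ ∘ₗ g)).subtype
  have mem_D {b : B} (hb : γ (g b) = 0) : b ∈ D ↔ ψ ⟨b, hb⟩ = 0 :=
    ⟨by rintro ⟨_, hψb, rfl⟩; exact hψb, fun hψb => ⟨⟨b, hb⟩, hψb, rfl⟩⟩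
  have hgf (a : A) : γ (g (f a)) = 0 := by rw [h.exact.apply_apply_eq_zero, map_zero]
  have f_mem_D (a : A) : f a ∈ D ↔ φ a = 0 := by rw [mem_D (hgf a), hψ a _ rfl]
  have hKD : K ≤ D.comap f := fun a ha => (f_mem_D a).mpr ha
  have hDγ : D ≤ LinearMap.ker (γ ∘ₗ g) := Submodule.map_subtype_le _ _
  have h' : IsShortExact (K.mapQ D f hKD) (D.liftQ (γ ∘ₗ g) hDγ) := by
    refine ⟨?_, fun x => ⟨fun hx => ?_, ?_⟩, ?_⟩
    · refine (injective_iff_map_eq_zero _).mpr fun x hx => ?_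
      obtain ⟨a, rfl⟩ := K.mkQ_surjective x
      exact (Submodule.Quotient.mk_eq_zero K).mpr
        ((f_mem_D a).mp ((Submodule.Quotient.mk_eq_zero D).mp hx))
    · obtain ⟨b, rfl⟩ := D.mkQ_surjective x
      obtain ⟨a, ha⟩ := hφ (ψ ⟨b, hx⟩)
      refine ⟨K.mkQ a, (Submodule.Quotient.eq D).mpr ?_⟩
      rw [mem_D (b := f a - b) (by rw [map_sub, map_sub, hgf, zero_sub, neg_eq_zero]; exact hx)]
      have hψ0 : ψ (⟨f a, hgf a⟩ - ⟨b, hx⟩) = 0 := by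
        rw [map_sub, hψ a ⟨f a, hgf a⟩ rfl, ha, sub_self]
      exact hψ0
    · rintro ⟨y, rfl⟩
      obtain ⟨a, rfl⟩ := K.mkQ_surjective y
      exact hgf a
    · exact fun x => ((hγ.comp h.surjective) x).imp' D.mkQ fun b hb => hb
  have hφ' : φ = K.liftQ φ le_rfl ∘ₗ K.mkQ := (K.liftQ_mkQ φ le_rfl).symm
  rw [hφ', extPullback_comp, LinearMap.comp_apply,
    h.connecting_extPullback h' (β := D.mkQ) (γ := γ) rfl rfl]
  exact extPullback_functional_mem_linearPart γ _

theorem IsShortExact.lcomp_surjective_of_smul {x : R} (hx : x ∈ 𝔪)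
    (h : IsShortExact (x • f) g) : Function.Surjective (g.lcomp R (R ⧸ 𝔪)) := by
  refine fun φ => (LinearMap.exact_lcomp_of_exact_of_surjective _ h.exact h.surjective φ).mp ?_
  ext a
  rw [LinearMap.lcomp_apply, LinearMap.smul_apply, map_smul, smul_quotient_eq_zero hx,
    LinearMap.zero_apply]

/-- The hypothesis on `ψ` says that `A` looks like a polynomial module in the variable `x`, as far
as its functionals are concerned. -/
theorem IsLinearAt.of_smul_id [𝔪.IsMaximal] {x : R} (hx : x ∈ 𝔪) {g : A →ₗ[R] C}
    (h : IsShortExact (x • LinearMap.id : A →ₗ[R] A) g)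
    (hψ : ∀ φ : A →ₗ[R] R ⧸ 𝔪, ∃ ψ : LinearMap.ker φ →ₗ[R] R ⧸ 𝔪,
      ∀ a (b : LinearMap.ker φ), (b : A) = x • a → ψ b = φ a)
    (hA : IsLinearAt 𝔪 i A) (hA' : IsLinearAt 𝔪 (i + 1) A) : IsLinearAt 𝔪 (i + 1) C := by
  have hg := h.lcomp_surjective_of_smul hx
  have : IsSimpleModule R (R ⧸ 𝔪) :=
    isSimpleModule_iff_isCoatom.mpr (Ideal.isMaximal_def.mp inferInstance)
  refine hA.of_connecting hA' h hg fun φ e => ?_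
  obtain hφ | rfl := φ.surjective_or_eq_zero
  · obtain ⟨γ, rfl⟩ := hg φ
    obtain ⟨ψ, hψ⟩ := hψ (γ ∘ₗ g)
    exact h.connecting_extPullback_mem_linearPart hφ (Function.Surjective.of_comp hφ) hψ e
  · rw [extPullback_zero, LinearMap.zero_apply, map_zero]
    exact zero_mem _

end Linear

section ExtBetti

variable {R : Type u} [CommRing R] (𝔪 : Ideal R)

/-- The `i`-th Betti number of `M` computed by `Ext`: for polynomial `R` and `𝔪` the ideal of the
variables it is the rank of the `i`-th term of the minimal free resolution of `M`. -/
noncomputable def extBetti (i : ℕ) (M : Type u) [AddCommGroup M] [Module R M] : ℕ∞ :=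
  Module.length R (ResidueExt 𝔪 i M)

variable {A B C : Type u} [AddCommGroup A] [Module R A] [AddCommGroup B] [Module R B]
  [AddCommGroup C] [Module R C] {f : A →ₗ[R] B} {g : B →ₗ[R] C} {i : ℕ}

theorem extBetti_congr (e : A ≃ₗ[R] B) : extBetti 𝔪 i A = extBetti 𝔪 i B :=
  (extCongr 𝔪 i e).symm.length_eq

theorem extBetti_of_subsingleton [Subsingleton A] : extBetti 𝔪 i A = 0 :=
  have := subsingleton_residueExt (𝔪 := 𝔪) (A := A) (i := i)
  Module.length_eq_zero

theorem extBetti_self_succ : extBetti 𝔪 (i + 1) R = 0 :=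
  have : Subsingleton (ResidueExt 𝔪 (i + 1) R) :=
    subsingleton_of_forall_eq 0 Abelian.Ext.eq_zero_of_projective
  Module.length_eq_zero

theorem extBetti_self_zero [𝔪.IsMaximal] : extBetti 𝔪 0 R = 1 := by
  have : IsSimpleModule R (R ⧸ 𝔪) :=
    isSimpleModule_iff_isCoatom.mpr (Ideal.isMaximal_def.mp inferInstance)
  rw [extBetti,
    ((residueExtZeroEquiv 𝔪).trans (LinearMap.ringLmapEquivSelf R R (R ⧸ 𝔪))).length_eq,
    Module.length_eq_one]

theorem isLinearAt_self : IsLinearAt 𝔪 i R := by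
  cases i with
  | zero => exact isLinearAt_zero
  | succ i =>
    have := Module.length_eq_zero_iff.mp (extBetti_self_succ 𝔪 (i := i))
    exact isLinearAt_of_subsingleton_ext

variable {𝔪}

theorem IsShortExact.extPullback_succ_injective (h : IsShortExact f g)
    (hf : Function.Surjective (extPullback 𝔪 i f)) :
    Function.Injective (extPullback 𝔪 (i + 1) g) := by
  refine (injective_iff_map_eq_zero _).mpr fun c hc => ?_
  obtain ⟨a, rfl⟩ := (h.exact_connecting_extPullback 𝔪 i c).mp hc
  exact (h.exact_extPullback_connecting 𝔪 i a).mpr (hf a)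

theorem IsShortExact.extPullback_surjective_of_eq_zero (h : IsShortExact f g)
    (hf : extPullback 𝔪 i f = 0) : Function.Surjective (extPullback 𝔪 i g) := fun b =>
  (h.exact_extPullback 𝔪 i b).mp (by rw [hf, LinearMap.zero_apply])

theorem extBetti_eq_add_of_isLinearAt (h : IsShortExact f g)
    (hf : Function.Surjective (f.lcomp R (R ⧸ 𝔪))) (hA : ∀ i, IsLinearAt 𝔪 i A) (i : ℕ) :
    extBetti 𝔪 i B = extBetti 𝔪 i A + extBetti 𝔪 i C := by
  have hsurj (i : ℕ) := (hA i).extPullback_surjective hf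
  have hinj : Function.Injective (extPullback 𝔪 i g) := by
    cases i with
    | zero => exact h.extPullback_zero_injective 𝔪
    | succ i => exact h.extPullback_succ_injective (hsurj i)
  rw [add_comm]
  exact Module.length_eq_add_of_exact _ _ hinj (hsurj i) (h.exact_extPullback 𝔪 i)

theorem IsShortExact.extBetti_zero_of_extPullback_eq_zero (h : IsShortExact f g)
    (hf : extPullback 𝔪 0 f = 0) : extBetti 𝔪 0 C = extBetti 𝔪 0 B :=
  (LinearEquiv.ofBijective (extPullback 𝔪 0 g)
    ⟨h.extPullback_zero_injective 𝔪, h.extPullback_surjective_of_eq_zero hf⟩).length_eq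

theorem IsShortExact.extBetti_succ_of_extPullback_eq_zero (h : IsShortExact f g)
    (hf : extPullback 𝔪 i f = 0) (hf' : extPullback 𝔪 (i + 1) f = 0) :
    extBetti 𝔪 (i + 1) C = extBetti 𝔪 i A + extBetti 𝔪 (i + 1) B := by
  have hinj : Function.Injective (h.connecting 𝔪 i) := by
    refine (injective_iff_map_eq_zero _).mpr fun a ha => ?_
    obtain ⟨b, rfl⟩ := (h.exact_extPullback_connecting 𝔪 i a).mp ha
    rw [hf, LinearMap.zero_apply]
  exact Module.length_eq_add_of_exact _ _ hinj (h.extPullback_surjective_of_eq_zero hf')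
    (h.exact_connecting_extPullback 𝔪 i)

theorem IsShortExact.extBetti_zero_of_smul {x : R} (hx : x ∈ 𝔪) (h : IsShortExact (x • f) g) :
    extBetti 𝔪 0 C = extBetti 𝔪 0 B :=
  h.extBetti_zero_of_extPullback_eq_zero (extPullback_smul_eq_zero 0 hx f)

theorem IsShortExact.extBetti_succ_of_smul {x : R} (hx : x ∈ 𝔪) (h : IsShortExact (x • f) g)
    (i : ℕ) : extBetti 𝔪 (i + 1) C = extBetti 𝔪 i A + extBetti 𝔪 (i + 1) B :=
  h.extBetti_succ_of_extPullback_eq_zero (extPullback_smul_eq_zero i hx f)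
    (extPullback_smul_eq_zero (i + 1) hx f)

end ExtBetti

/-! ### Comparison of Tor and Ext -/

section Homology

variable {R : Type u} [CommRing R] {A B C A' B' C' N V : Type*}
  [AddCommGroup A] [Module R A] [AddCommGroup B] [Module R B] [AddCommGroup C] [Module R C]
  [AddCommGroup A'] [Module R A'] [AddCommGroup B'] [Module R B'] [AddCommGroup C'] [Module R C']
  [AddCommGroup N] [Module R N] [AddCommGroup V] [Module R V]
  {a : A →ₗ[R] B} {b : B →ₗ[R] C} (hab : ∀ x, a x ∈ LinearMap.ker b)
  {a' : A' →ₗ[R] B'} {b' : B' →ₗ[R] C'} (hab' : ∀ x, a' x ∈ LinearMap.ker b')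

/-- The homology `ker b / im a` of a complex `A → B → C` of unbundled modules. -/
abbrev Homology : Type _ :=
  LinearMap.ker b ⧸ LinearMap.range (a.codRestrict (LinearMap.ker b) hab)

theorem isTorsionBySet_homology {s : Set R} (hB : Module.IsTorsionBySet R B s) :
    Module.IsTorsionBySet R (Homology hab) s :=
  Module.IsTorsionBySet.quotient _ fun y _ => Subtype.ext (@hB y _)

theorem length_homology_eq {θ : LinearMap.ker b →ₗ[R] V} (hθ : Function.Surjective θ)
    (hker : ∀ y, θ y = 0 ↔ ∃ x, a x = y) : Module.length R (Homology hab) = Module.length R V := by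
  have heq : LinearMap.range (a.codRestrict (LinearMap.ker b) hab) = LinearMap.ker θ := by
    ext y
    rw [LinearMap.mem_ker, hker, LinearMap.range_codRestrict, Submodule.mem_comap]
    rfl
  exact ((Submodule.quotEquivOfEq _ _ heq).trans (θ.quotKerEquivOfSurjective hθ)).length_eq

theorem length_homology_congr (eA : A ≃ₗ[R] A') (eB : B ≃ₗ[R] B') (eC : C ≃ₗ[R] C')
    (ha : ∀ x, eB (a x) = a' (eA x)) (hb : ∀ y, eC (b y) = b' (eB y)) :
    Module.length R (Homology hab) = Module.length R (Homology hab') := by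
  have hmem (y : LinearMap.ker b) : eB y ∈ LinearMap.ker b' := by
    rw [LinearMap.mem_ker, ← hb, y.2, map_zero]
  let θ := Submodule.mkQ (LinearMap.range (a'.codRestrict _ hab')) ∘ₗ
    (eB.toLinearMap ∘ₗ (LinearMap.ker b).subtype).codRestrict (LinearMap.ker b') hmem
  have hθ : Function.Surjective θ := fun z => by
    obtain ⟨⟨y, hy⟩, rfl⟩ := Submodule.mkQ_surjective _ z
    have hy' : b (eB.symm y) = 0 :=
      eC.injective (by rw [hb, eB.apply_symm_apply, map_zero]; exact hy)
    exact ⟨⟨eB.symm y, hy'⟩, congrArg (Submodule.mkQ _) (Subtype.ext (eB.apply_symm_apply y))⟩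
  refine length_homology_eq hab hθ fun y => ?_
  rw [← LinearMap.mem_ker, LinearMap.ker_comp, Submodule.ker_mkQ, Submodule.mem_comap,
    LinearMap.range_codRestrict, Submodule.mem_comap]
  change (∃ x', a' x' = eB y) ↔ _
  simp only [eA.surjective.exists, ← ha, eB.injective.eq_iff]

theorem lcomp_mem_ker_lcomp (hab : ∀ x, a x ∈ LinearMap.ker b) (g : C →ₗ[R] N) :
    b.lcomp R N g ∈ LinearMap.ker (a.lcomp R N) :=
  LinearMap.ext fun x => by
    rw [LinearMap.lcomp_apply, LinearMap.lcomp_apply, hab x, map_zero, LinearMap.zero_apply]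

/-- A functional on `B` that kills the image of `a`, as a functional on `ker b / im a`. -/
noncomputable def homologyFunctional :
    LinearMap.ker (a.lcomp R N) →ₗ[R] (Homology hab →ₗ[R] N) where
  toFun f := Submodule.liftQ _ (f.1 ∘ₗ (LinearMap.ker b).subtype) <| by
    rintro _ ⟨x, rfl⟩
    exact LinearMap.congr_fun f.2 x
  map_add' _ _ := Submodule.linearMap_qext _ rfl
  map_smul' _ _ := Submodule.linearMap_qext _ rfl

variable {𝔪 : Ideal R} [𝔪.IsMaximal]

theorem homologyFunctional_surjective (hB : Module.IsTorsionBySet R B 𝔪) :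
    Function.Surjective (homologyFunctional (N := N) hab) := fun φ => by
  have := isSemisimpleModule_of_isTorsionBySet hB
  let q := Submodule.mkQ (LinearMap.range (a.codRestrict (LinearMap.ker b) hab))
  obtain ⟨f, hf⟩ := IsSemisimpleModule.extension_property (LinearMap.ker b).subtype
    (Submodule.subtype_injective _) (φ ∘ₗ q)
  have hfa : f ∈ LinearMap.ker (a.lcomp R N) := LinearMap.ext fun x => by
    have hq : q ⟨a x, hab x⟩ = 0 := (Submodule.Quotient.mk_eq_zero _).mpr ⟨x, rfl⟩
    refine (LinearMap.congr_fun hf ⟨a x, hab x⟩).trans ?_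
    rw [LinearMap.comp_apply, hq, map_zero, LinearMap.zero_apply]
  exact ⟨⟨f, hfa⟩, Submodule.linearMap_qext _ hf⟩

theorem homologyFunctional_eq_zero_iff (hC : Module.IsTorsionBySet R C 𝔪)
    (f : LinearMap.ker (a.lcomp R N)) :
    homologyFunctional hab f = 0 ↔ ∃ g, b.lcomp R N g = f := by
  refine ⟨fun hf => ?_, ?_⟩
  · have := isSemisimpleModule_of_isTorsionBySet hC
    have hker : LinearMap.ker b ≤ LinearMap.ker f.1 := fun y hy =>
      LinearMap.congr_fun hf (Submodule.Quotient.mk ⟨y, hy⟩)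
    obtain ⟨g, hg⟩ := IsSemisimpleModule.extension_property ((LinearMap.ker b).liftQ b le_rfl)
      (LinearMap.ker_eq_bot.mp (Submodule.ker_liftQ_eq_bot' _ _ rfl))
      ((LinearMap.ker b).liftQ f.1 hker)
    exact ⟨g, LinearMap.ext fun y => LinearMap.congr_fun hg ((LinearMap.ker b).mkQ y)⟩
  · rintro ⟨g, hg⟩
    refine Submodule.linearMap_qext _ (LinearMap.ext fun y => ?_)
    change f.1 y = 0
    rw [← hg, LinearMap.lcomp_apply, y.2, map_zero]

theorem length_homology_lcomp (hB : Module.IsTorsionBySet R B 𝔪)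
    (hC : Module.IsTorsionBySet R C 𝔪) :
    Module.length R (Homology (lcomp_mem_ker_lcomp (N := R ⧸ 𝔪) hab)) =
      Module.length R (Homology hab) := by
  rw [length_homology_eq _ (homologyFunctional_surjective hab hB)
    (homologyFunctional_eq_zero_iff hab hC),
    length_functionals (isTorsionBySet_homology hab hB)]

end Homology

section ExtTor

variable {R : Type u} [CommRing R] {𝔪 : Ideal R}

/-- Functionals on `(R ⧸ 𝔪) ⊗ A` are functionals on `A`. -/
noncomputable def tensorFunctional (𝔪 : Ideal R) (A : Type*) [AddCommGroup A] [Module R A] :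
    (A →ₗ[R] R ⧸ 𝔪) ≃ₗ[R] (TensorProduct R (R ⧸ 𝔪) A →ₗ[R] R ⧸ 𝔪) where
  toFun f := LinearMap.mul' R (R ⧸ 𝔪) ∘ₗ f.lTensor (R ⧸ 𝔪)
  map_add' f g := by rw [LinearMap.lTensor_add, LinearMap.comp_add]
  map_smul' r f := by rw [LinearMap.lTensor_smul, LinearMap.comp_smul, RingHom.id_apply]
  invFun g := g ∘ₗ TensorProduct.mk R (R ⧸ 𝔪) A 1
  left_inv f := LinearMap.ext fun x => one_mul (f x)
  right_inv g := by
    ext x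
    exact one_mul (g (1 ⊗ₜ x))

theorem tensorFunctional_comp {A B : Type*} [AddCommGroup A] [Module R A] [AddCommGroup B]
    [Module R B] (a : A →ₗ[R] B) (f : B →ₗ[R] R ⧸ 𝔪) :
    tensorFunctional 𝔪 A (a.lcomp R (R ⧸ 𝔪) f) =
      (a.lTensor (R ⧸ 𝔪)).lcomp R (R ⧸ 𝔪) (tensorFunctional 𝔪 B f) :=
  TensorProduct.ext' fun _ _ => rfl

variable {M : Type u} [AddCommGroup M] [Module R M]
  (P : ProjectiveResolution (ModuleCat.of R M)) (i : ℕ)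

theorem d_mem_ker_d (x : P.complex.X (i + 1 + 1)) :
    (P.complex.d (i + 1 + 1) (i + 1)).hom x ∈ LinearMap.ker (P.complex.d (i + 1) i).hom :=
  LinearMap.congr_fun (congrArg ModuleCat.Hom.hom (P.complex.d_comp_d (i + 1 + 1) (i + 1) i)) x

/-- The class in `Ext^i(M, R ⧸ 𝔪)` of a cocycle of `Hom(P, R ⧸ 𝔪)`. -/
noncomputable def cocycleClass :
    LinearMap.ker ((P.complex.d (i + 1) i).hom.lcomp R (R ⧸ 𝔪)) →ₗ[R] ResidueExt 𝔪 i M where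
  toFun f := P.extMk (Y := ModuleCat.of R (R ⧸ 𝔪)) (ModuleCat.ofHom f.1) (i + 1) rfl
    (ModuleCat.hom_ext f.2)
  map_add' f g := by
    rw [P.add_extMk]
    rfl
  map_smul' r f := by
    rw [RingHom.id_apply, Abelian.Ext.smul_eq_comp_mk₀ (R := R), P.extMk_comp_mk₀]
    rfl

theorem cocycleClass_surjective : Function.Surjective (cocycleClass (𝔪 := 𝔪) P i) := fun e => by
  obtain ⟨f, hf, rfl⟩ := P.extMk_surjective e (i + 1) rfl
  exact ⟨⟨f.hom, congrArg ModuleCat.Hom.hom hf⟩, rfl⟩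

theorem cocycleClass_succ_eq_zero_iff
    (f : LinearMap.ker ((P.complex.d (i + 1 + 1) (i + 1)).hom.lcomp R (R ⧸ 𝔪))) :
    cocycleClass P (i + 1) f = 0 ↔ ∃ g, (P.complex.d (i + 1) i).hom.lcomp R (R ⧸ 𝔪) g = f := by
  refine (P.extMk_eq_zero_iff (Y := ModuleCat.of R (R ⧸ 𝔪)) (ModuleCat.ofHom f.1) (i + 1 + 1) rfl
    (ModuleCat.hom_ext f.2) i rfl).trans ⟨?_, ?_⟩
  · rintro ⟨g, hg⟩
    exact ⟨g.hom, congrArg ModuleCat.Hom.hom hg⟩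
  · rintro ⟨g, hg⟩
    exact ⟨ModuleCat.ofHom g, ModuleCat.hom_ext hg⟩

theorem lTensor_d_mem_ker_lTensor_d (x : TensorProduct R (R ⧸ 𝔪) (P.complex.X (i + 1 + 1))) :
    (P.complex.d (i + 1 + 1) (i + 1)).hom.lTensor (R ⧸ 𝔪) x ∈
      LinearMap.ker ((P.complex.d (i + 1) i).hom.lTensor (R ⧸ 𝔪)) := by
  have hd : (P.complex.d (i + 1) i).hom ∘ₗ (P.complex.d (i + 1 + 1) (i + 1)).hom = 0 :=
    LinearMap.ext (d_mem_ker_d P i)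
  rw [LinearMap.mem_ker, ← LinearMap.comp_apply, ← LinearMap.lTensor_comp, hd,
    LinearMap.lTensor_zero, LinearMap.zero_apply]

theorem extBetti_succ_eq_length_dual_homology : extBetti 𝔪 (i + 1) M =
    Module.length R (Homology (lcomp_mem_ker_lcomp (N := R ⧸ 𝔪) (d_mem_ker_d P i))) :=
  (length_homology_eq (lcomp_mem_ker_lcomp (N := R ⧸ 𝔪) (d_mem_ker_d P i))
    (cocycleClass_surjective P (i + 1)) (cocycleClass_succ_eq_zero_iff P i)).symm

theorem extBetti_succ_eq_length_homology [𝔪.IsMaximal] : extBetti 𝔪 (i + 1) M =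
    Module.length R (Homology (lTensor_d_mem_ker_lTensor_d (𝔪 := 𝔪) P i)) :=
  calc extBetti 𝔪 (i + 1) M
    _ = Module.length R (Homology (lcomp_mem_ker_lcomp (N := R ⧸ 𝔪) (d_mem_ker_d P i))) :=
      extBetti_succ_eq_length_dual_homology P i
    _ = Module.length R (Homology
          (lcomp_mem_ker_lcomp (N := R ⧸ 𝔪) (lTensor_d_mem_ker_lTensor_d (𝔪 := 𝔪) P i))) :=
      length_homology_congr _ _ (tensorFunctional 𝔪 _) (tensorFunctional 𝔪 _)
        (tensorFunctional 𝔪 _) (tensorFunctional_comp _) (tensorFunctional_comp _)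
    _ = _ := length_homology_lcomp _ isTorsionBySet_quotient_tensor isTorsionBySet_quotient_tensor

/-- `Tor_i(R ⧸ 𝔪, M)`. -/
noncomputable abbrev ResidueTor (𝔪 : Ideal R) (i : ℕ) (M : Type u) [AddCommGroup M] [Module R M] :
    ModuleCat R :=
  ((Tor (ModuleCat R) i).obj (ModuleCat.of R (R ⧸ 𝔪))).obj (ModuleCat.of R M)

/-- `Tor_{i+1}(R ⧸ 𝔪, M)` as the homology of `(R ⧸ 𝔪) ⊗ P`. -/
noncomputable def residueTorSuccEquiv : ResidueTor 𝔪 (i + 1) M ≃ₗ[R]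
    Homology (lTensor_d_mem_ker_lTensor_d (𝔪 := 𝔪) P i) :=
  let F := (MonoidalCategory.tensoringLeft (ModuleCat R)).obj (ModuleCat.of R (R ⧸ 𝔪))
  let K := (F.mapHomologicalComplex (ComplexShape.down ℕ)).obj P.complex
  (P.isoLeftDerivedObj F (i + 1) ≪≫ K.homologyIsoSc' (i + 1 + 1) (i + 1) i (by simp) (by simp) ≪≫
    (K.sc' (i + 1 + 1) (i + 1) i).moduleCatHomologyIso).toLinearEquiv

/-- `Tor_0(R ⧸ 𝔪, M) = (R ⧸ 𝔪) ⊗ M`. -/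
noncomputable def residueTorZeroEquiv : ResidueTor 𝔪 0 M ≃ₗ[R] TensorProduct R (R ⧸ 𝔪) M :=
  let F := (MonoidalCategory.tensoringLeft (ModuleCat R)).obj (ModuleCat.of R (R ⧸ 𝔪))
  have : Limits.PreservesFiniteColimits F := inferInstanceAs <|
    Limits.PreservesFiniteColimits (MonoidalCategory.tensorLeft (ModuleCat.of R (R ⧸ 𝔪)))
  (F.leftDerivedZeroIsoSelf.app (ModuleCat.of R M)).toLinearEquiv

theorem length_residueTor [𝔪.IsMaximal] :
    Module.length R (ResidueTor 𝔪 i M) = extBetti 𝔪 i M := by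
  cases i with
  | zero =>
    rw [residueTorZeroEquiv.length_eq, ← length_functionals isTorsionBySet_quotient_tensor]
    exact ((tensorFunctional 𝔪 M).symm.trans (residueExtZeroEquiv 𝔪).symm).length_eq
  | succ i =>
    let P := projectiveResolution (ModuleCat.of R M)
    exact (residueTorSuccEquiv P i).length_eq.trans (extBetti_succ_eq_length_homology P i).symm

theorem isTorsionBySet_residueTor : Module.IsTorsionBySet R (ResidueTor 𝔪 i M) 𝔪 := by
  cases i with
  | zero =>
    exact isTorsionBySet_of_linearEquiv residueTorZeroEquiv isTorsionBySet_quotient_tensor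
  | succ i =>
    let P := projectiveResolution (ModuleCat.of R M)
    have hP : Module.IsTorsionBySet R (TensorProduct R (R ⧸ 𝔪) (P.complex.X (i + 1))) 𝔪 :=
      isTorsionBySet_quotient_tensor
    exact isTorsionBySet_of_linearEquiv (residueTorSuccEquiv P i) (isTorsionBySet_homology _ hP)

end ExtTor

open MvPolynomial
open Finsupp (single)

/-! ### Monomial subquotients -/

section MonomialModule

variable {σ k : Type u} [CommRing k]

variable (k) in
/-- The ideal of `k[x_s : s ∈ σ]` spanned by the monomials with exponent in `U`. Upper sets are
ordered by reverse inclusion, so `I_⊥` is the unit ideal. -/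
noncomputable def monomialIdeal (U : UpperSet (σ →₀ ℕ)) : Ideal (MvPolynomial σ k) :=
  restrictSupportIdeal k (U : Set (σ →₀ ℕ)) U.upper

variable (k) in
/-- The subquotient `I_U ⧸ (I_U ∩ I_V)` of the polynomial ring, where `I_U` is the monomial ideal
of `U`; every module for which Betti numbers are computed here is of this form. -/
abbrev MonomialModule (U V : UpperSet (σ →₀ ℕ)) : Type u :=
  monomialIdeal k U ⧸ (monomialIdeal k V).submoduleOf (monomialIdeal k U)

/-- The variable `x_j` does not occur in the minimal generators of the monomial ideal of `U`. -/
def AvoidsVar (U : UpperSet (σ →₀ ℕ)) (j : σ) : Prop :=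
  ∀ u, u + Finsupp.single j 1 ∈ U → u ∈ U

/-- The monomial ideal of `U` is generated in degree `d`. -/
def IsGeneratedInDegree (U : UpperSet (σ →₀ ℕ)) (d : ℕ) : Prop :=
  ∀ u ∈ U, ∃ w ∈ U, w ≤ u ∧ w.degree = d

variable {U V V' W V₁ : UpperSet (σ →₀ ℕ)} {e : σ →₀ ℕ} {p : MvPolynomial σ k}

theorem add_mem_of_mem {u : σ →₀ ℕ} (hu : u ∈ U) (e : σ →₀ ℕ) : u + e ∈ U :=
  U.upper (le_add_of_nonneg_right zero_le) hu

theorem AvoidsVar.exists_eq_add_single {j : σ} (hU : AvoidsVar U j) {u : σ →₀ ℕ} (hu : u ∈ U)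
    (huj : u j ≠ 0) : ∃ w ∈ U, u = w + Finsupp.single j 1 := by
  obtain ⟨w, rfl⟩ := exists_add_of_le
    (Finsupp.single_le_iff.mpr (Nat.one_le_iff_ne_zero.mpr huj))
  rw [add_comm] at hu ⊢
  exact ⟨w, hU w hu, rfl⟩

theorem mem_monomialIdeal : p ∈ monomialIdeal k U ↔ ∀ u, coeff u p ≠ 0 → u ∈ U := by
  change ((p.support : Set (σ →₀ ℕ)) ⊆ U) ↔ _
  simp only [Set.subset_def, mem_support_iff, SetLike.mem_coe]

theorem monomial_mem_monomialIdeal {u : σ →₀ ℕ} (hu : u ∈ U) (c : k) :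
    monomial u c ∈ monomialIdeal k U := by
  classical
  refine mem_monomialIdeal.mpr fun v hv => ?_
  rw [coeff_monomial, ne_eq, ite_eq_right_iff, Classical.not_imp] at hv
  exact hv.1 ▸ hu

theorem mem_ideal_of_monomial_mem {J : Ideal (MvPolynomial σ k)}
    (h : ∀ u, coeff u p ≠ 0 → monomial u (1 : k) ∈ J) : p ∈ J := by
  rw [p.as_sum]
  refine sum_mem fun u hu => ?_
  rw [← mul_one (coeff u p), ← C_mul_monomial]
  exact J.mul_mem_left _ (h u (mem_support_iff.mp hu))

theorem monomialIdeal_le {J : Ideal (MvPolynomial σ k)} (h : ∀ u ∈ U, monomial u (1 : k) ∈ J) :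
    monomialIdeal k U ≤ J :=
  fun _ hp => mem_ideal_of_monomial_mem fun u hu => h u (mem_monomialIdeal.mp hp u hu)

theorem monomial_mul_mem_monomialIdeal :
    monomial e 1 * p ∈ monomialIdeal k U ↔ ∀ w, coeff w p ≠ 0 → w + e ∈ U := by
  refine mem_monomialIdeal.trans ⟨fun h w hw => ?_, fun h u hu => ?_⟩
  · rw [add_comm]
    exact h _ (by rwa [coeff_monomial_mul, one_mul])
  · rw [coeff_monomial_mul'] at hu
    split_ifs at hu with he
    · rw [← tsub_add_cancel_of_le he]
      exact h _ (by rwa [one_mul] at hu)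
    · exact absurd rfl hu

theorem exists_monomial_mul_sub_mem (hp : ∀ u, coeff u p ≠ 0 → u ∈ V ∨ ∃ w ∈ W, u = w + e) :
    ∃ q ∈ monomialIdeal k W, monomial e 1 * q - p ∈ monomialIdeal k V := by
  have hmem : p ∈ monomialIdeal k V ⊔ Ideal.span {monomial e 1} * monomialIdeal k W := by
    refine mem_ideal_of_monomial_mem fun u hu => ?_
    obtain hu | ⟨w, hw, rfl⟩ := hp u hu
    · exact Ideal.mem_sup_left (monomial_mem_monomialIdeal hu _)
    · refine Ideal.mem_sup_right (Ideal.mem_span_singleton_mul.mpr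
        ⟨_, monomial_mem_monomialIdeal hw 1, ?_⟩)
      rw [monomial_mul, one_mul, add_comm]
  obtain ⟨a, ha, b, hb, rfl⟩ := Submodule.mem_sup.mp hmem
  obtain ⟨q, hq, rfl⟩ := Ideal.mem_span_singleton_mul.mp hb
  exact ⟨q, hq, by rw [sub_add_cancel_right]; exact neg_mem ha⟩

variable (V) in
/-- The quotient map `I_U → I_U ⧸ (I_U ∩ I_V)`. -/
noncomputable abbrev MonomialModule.mk :
    monomialIdeal k U →ₗ[MvPolynomial σ k] MonomialModule k U V :=
  Submodule.mkQ _

theorem MonomialModule.mk_surjective : Function.Surjective (mk V : monomialIdeal k U →ₗ[_] _) :=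
  Submodule.mkQ_surjective _

theorem MonomialModule.mk_eq_zero_iff {p : monomialIdeal k U} :
    mk V p = 0 ↔ (p : MvPolynomial σ k) ∈ monomialIdeal k V :=
  Submodule.Quotient.mk_eq_zero _

/-- Multiplication by `x^e` as a map `I_W ⧸ I_{V₁} → I_U ⧸ I_V`. -/
noncomputable def mulMonomial (e : σ →₀ ℕ) (hW : ∀ w ∈ W, w + e ∈ U)
    (hV : ∀ w ∈ W, (w ∈ V₁ ↔ w + e ∈ V)) :
    MonomialModule k W V₁ →ₗ[MvPolynomial σ k] MonomialModule k U V :=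
  Submodule.mapQ _ _
    ((LinearMap.mulLeft (MvPolynomial σ k) (monomial e 1)).restrict fun _ hp =>
      monomial_mul_mem_monomialIdeal.mpr fun w hw => hW w (mem_monomialIdeal.mp hp w hw))
    fun p hp => monomial_mul_mem_monomialIdeal.mpr fun w hw =>
      (hV w (mem_monomialIdeal.mp p.2 w hw)).mp (mem_monomialIdeal.mp hp w hw)

/-- The projection `I_U ⧸ I_V → I_U ⧸ I_{V'}`. -/
noncomputable def monomialProj (hV : ∀ u ∈ U, u ∈ V → u ∈ V') :
    MonomialModule k U V →ₗ[MvPolynomial σ k] MonomialModule k U V' :=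
  Submodule.factor fun p hp => mem_monomialIdeal.mpr fun u hu =>
    hV u (mem_monomialIdeal.mp p.2 u hu) (mem_monomialIdeal.mp hp u hu)

section mulMonomial

variable (hW : ∀ w ∈ W, w + e ∈ U) (hV : ∀ w ∈ W, (w ∈ V₁ ↔ w + e ∈ V))

open MonomialModule (mk mk_surjective mk_eq_zero_iff)

theorem mulMonomial_mk_eq_zero_iff {p : monomialIdeal k W} :
    mulMonomial e hW hV (mk V₁ p) = 0 ↔ monomial e 1 * (p : MvPolynomial σ k) ∈ monomialIdeal k V :=
  mk_eq_zero_iff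

theorem mulMonomial_mk_eq_mk_iff {p : monomialIdeal k W} {q : monomialIdeal k U} :
    mulMonomial e hW hV (mk V₁ p) = mk V q ↔
      monomial e 1 * (p : MvPolynomial σ k) - (q : MvPolynomial σ k) ∈ monomialIdeal k V :=
  Submodule.Quotient.eq ((monomialIdeal k V).submoduleOf (monomialIdeal k U))

theorem mulMonomial_injective : Function.Injective (mulMonomial (k := k) e hW hV) := by
  refine (injective_iff_map_eq_zero _).mpr fun x hx => ?_
  obtain ⟨p, rfl⟩ := mk_surjective x
  have hep := monomial_mul_mem_monomialIdeal.mp ((mulMonomial_mk_eq_zero_iff hW hV).mp hx)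
  exact mk_eq_zero_iff.mpr (mem_monomialIdeal.mpr fun w hw =>
    (hV w (mem_monomialIdeal.mp p.2 w hw)).mpr (hep w hw))

theorem mk_mem_range_mulMonomial (p : monomialIdeal k U)
    (hp : ∀ u, coeff u (p : MvPolynomial σ k) ≠ 0 → u ∈ V ∨ ∃ w ∈ W, u = w + e) :
    mk V p ∈ Set.range (mulMonomial (k := k) e hW hV) := by
  obtain ⟨q, hq, hqp⟩ := exists_monomial_mul_sub_mem hp
  exact ⟨mk V₁ ⟨q, hq⟩, (mulMonomial_mk_eq_mk_iff hW hV).mpr hqp⟩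

theorem isShortExact_mulMonomial (hV' : ∀ u ∈ U, (u ∈ V' ↔ u ∈ V ∨ ∃ w ∈ W, u = w + e)) :
    IsShortExact (mulMonomial (k := k) e hW hV)
      (monomialProj fun u hu huV => (hV' u hu).mpr (Or.inl huV)) where
  injective := mulMonomial_injective hW hV
  exact x := by
    refine ⟨fun hx => ?_, ?_⟩
    · obtain ⟨p, rfl⟩ := mk_surjective x
      have hp : (p : MvPolynomial σ k) ∈ monomialIdeal k V' := mk_eq_zero_iff.mp hx
      exact mk_mem_range_mulMonomial hW hV p fun u hu =>
        (hV' u (mem_monomialIdeal.mp p.2 u hu)).mp (mem_monomialIdeal.mp hp u hu)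
    · rintro ⟨y, rfl⟩
      obtain ⟨q, rfl⟩ := mk_surjective y
      refine mk_eq_zero_iff.mpr (monomial_mul_mem_monomialIdeal.mpr fun w hw => ?_)
      have hwW := mem_monomialIdeal.mp q.2 w hw
      exact (hV' _ (hW w hwW)).mpr (Or.inr ⟨w, hwW, rfl⟩)
  surjective x := by
    obtain ⟨p, rfl⟩ := mk_surjective x
    exact ⟨mk V p, rfl⟩

/-- Multiplication by `x^e` as an isomorphism `I_W ⧸ I_{V₁} ≃ I_U ⧸ I_V`. -/
noncomputable def mulMonomialEquiv (h : ∀ u ∈ U, u ∈ V ∨ ∃ w ∈ W, u = w + e) :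
    MonomialModule k W V₁ ≃ₗ[MvPolynomial σ k] MonomialModule k U V :=
  LinearEquiv.ofBijective (mulMonomial e hW hV) ⟨mulMonomial_injective hW hV, fun x => by
    obtain ⟨p, rfl⟩ := mk_surjective x
    exact mk_mem_range_mulMonomial hW hV p fun u hu => h u (mem_monomialIdeal.mp p.2 u hu)⟩

theorem mulMonomial_self_eq_smul (hU : ∀ u ∈ U, u + e ∈ U) (hV : ∀ u ∈ U, (u ∈ V ↔ u + e ∈ V)) :
    mulMonomial (k := k) e hU hV = (monomial e 1 : MvPolynomial σ k) • LinearMap.id :=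
  Submodule.linearMap_qext _ (LinearMap.ext fun _ => rfl)

theorem mulMonomial_eq_smul (hWU : ∀ w ∈ W, w ∈ U) (hV₀ : ∀ w ∈ W, (w ∈ V₁ ↔ w ∈ V)) :
    mulMonomial (k := k) e hW hV = (monomial e 1 : MvPolynomial σ k) •
      mulMonomial (e := 0) (by simpa only [add_zero]) (by simpa only [add_zero]) := by
  refine Submodule.linearMap_qext _ (LinearMap.ext fun p => congrArg (mk V) (Subtype.ext ?_))
  change monomial e 1 * (p : MvPolynomial σ k) =
    monomial e 1 * (monomial 0 1 * (p : MvPolynomial σ k))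
  rw [monomial_zero', C_1, one_mul]

theorem mulMonomial_comp_monomialProj (hU : ∀ u ∈ U, u + e ∈ U)
    (hV : ∀ u ∈ U, (u ∈ V' ↔ u + e ∈ V)) (hVV' : ∀ u ∈ U, u ∈ V → u ∈ V') :
    mulMonomial (k := k) e hU hV ∘ₗ monomialProj hVV' =
      (monomial e 1 : MvPolynomial σ k) • LinearMap.id :=
  Submodule.linearMap_qext _ (LinearMap.ext fun _ => rfl)

end mulMonomial

theorem subsingleton_monomialModule (h : ∀ u ∈ U, u ∈ V) : Subsingleton (MonomialModule k U V) :=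
  Submodule.Quotient.subsingleton_iff.mpr (Submodule.submoduleOf_eq_top.mpr
    (monomialIdeal_le fun u hu => monomial_mem_monomialIdeal (h u hu) 1))

theorem monomialIdeal_bot : monomialIdeal k (⊥ : UpperSet (σ →₀ ℕ)) = ⊤ :=
  eq_top_iff.mpr fun _ _ => mem_monomialIdeal.mpr fun _ _ => UpperSet.mem_bot

theorem monomialIdeal_eq_bot (h : ∀ u, u ∉ V) : monomialIdeal k V = ⊥ :=
  le_bot_iff.mp (monomialIdeal_le fun u hu => absurd hu (h u))

variable (k V) in
/-- The module `I_⊥ ⧸ I_V` is the quotient of the polynomial ring by `I_V`. -/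
noncomputable def quotientEquivMonomialModule :
    (MvPolynomial σ k ⧸ monomialIdeal k V) ≃ₗ[MvPolynomial σ k] MonomialModule k ⊥ V :=
  LinearEquiv.symm <| Submodule.Quotient.equiv _ _
    ((LinearEquiv.ofEq _ _ monomialIdeal_bot).trans Submodule.topEquiv) <| by
      ext p
      refine ⟨?_, fun hp => ⟨⟨p, monomialIdeal_bot (k := k) ▸ Submodule.mem_top⟩, hp, rfl⟩⟩
      rintro ⟨q, hq, rfl⟩
      exact hq

/-- If `V` is empty then `I_⊥ ⧸ I_V` is free of rank one. -/
noncomputable def freeEquivMonomialModule (h : ∀ u, u ∉ V) :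
    MvPolynomial σ k ≃ₗ[MvPolynomial σ k] MonomialModule k ⊥ V :=
  (Submodule.quotEquivOfEqBot _ (monomialIdeal_eq_bot h)).symm.trans
    (quotientEquivMonomialModule k V)

end MonomialModule

section DivVar

variable {σ k : Type u} [CommRing k] {U V : UpperSet (σ →₀ ℕ)} {j : σ}

theorem divMonomial_X_mul_of_ne {i : σ} (hij : i ≠ j) (p : MvPolynomial σ k) :
    (X i * p).divMonomial (Finsupp.single j 1) = X i * p.divMonomial (Finsupp.single j 1) := by
  classical
  ext u
  rw [coeff_divMonomial, coeff_X_mul', coeff_X_mul', coeff_divMonomial]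
  have hiff : i ∈ (Finsupp.single j 1 + u).support ↔ i ∈ u.support := by
    rw [Finsupp.mem_support_iff, Finsupp.mem_support_iff, Finsupp.add_apply,
      Finsupp.single_eq_of_ne hij, zero_add]
  refine ite_congr (propext hiff) (fun hi => ?_) fun _ => rfl
  have hle : Finsupp.single i 1 ≤ u :=
    Finsupp.single_le_iff.mpr (Nat.one_le_iff_ne_zero.mpr (Finsupp.mem_support_iff.mp hi))
  rw [add_tsub_assoc_of_le hle]

theorem divMonomial_C_mul (c : k) (p : MvPolynomial σ k) (s : σ →₀ ℕ) :
    (C c * p).divMonomial s = C c * p.divMonomial s := by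
  ext u
  rw [coeff_divMonomial, coeff_C_mul, coeff_C_mul, coeff_divMonomial]

theorem AvoidsVar.divMonomial_mem (hU : AvoidsVar U j) {p : MvPolynomial σ k}
    (hp : p ∈ monomialIdeal k U) : p.divMonomial (Finsupp.single j 1) ∈ monomialIdeal k U := by
  refine mem_monomialIdeal.mpr fun u hu => hU u (mem_monomialIdeal.mp hp _ ?_)
  rwa [coeff_divMonomial, add_comm] at hu

namespace MonomialModule

/-- Division by `x_j`, discarding the monomials that `x_j` does not divide. -/
noncomputable def divVar (hU : AvoidsVar U j) (hV : AvoidsVar V j) :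
    MonomialModule k U V →+ MonomialModule k U V :=
  QuotientAddGroup.map _ _
    { toFun p := ⟨_, hU.divMonomial_mem p.2⟩
      map_zero' := Subtype.ext (zero_divMonomial _)
      map_add' _ _ := Subtype.ext (add_divMonomial _ _ _) : monomialIdeal k U →+ monomialIdeal k U }
    fun _ hp => hV.divMonomial_mem hp

variable (hU : AvoidsVar U j) (hV : AvoidsVar V j)

theorem divVar_X_smul (x : MonomialModule k U V) :
    divVar hU hV ((X j : MvPolynomial σ k) • x) = x := by
  obtain ⟨p, rfl⟩ := mk_surjective x
  exact congrArg (mk V) (Subtype.ext (X_mul_divMonomial _ _))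

theorem divVar_X_smul_of_ne {i : σ} (hij : i ≠ j) (x : MonomialModule k U V) :
    divVar hU hV ((X i : MvPolynomial σ k) • x) = (X i : MvPolynomial σ k) • divVar hU hV x := by
  obtain ⟨p, rfl⟩ := mk_surjective x
  exact congrArg (mk V) (Subtype.ext (divMonomial_X_mul_of_ne hij _))

theorem divVar_C_smul (c : k) (x : MonomialModule k U V) :
    divVar hU hV ((C c : MvPolynomial σ k) • x) = (C c : MvPolynomial σ k) • divVar hU hV x := by
  obtain ⟨p, rfl⟩ := mk_surjective x
  exact congrArg (mk V) (Subtype.ext (divMonomial_C_mul _ _ _))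

end MonomialModule

open MonomialModule

theorem X_mem_idealOfVars (j : σ) : (X j : MvPolynomial σ k) ∈ idealOfVars σ k :=
  Ideal.subset_span ⟨j, rfl⟩

theorem map_divVar_smul_of_map_eq_zero (hU : AvoidsVar U j) (hV : AvoidsVar V j)
    (φ : MonomialModule k U V →ₗ[MvPolynomial σ k] MvPolynomial σ k ⧸ idealOfVars σ k)
    (r : MvPolynomial σ k) {x : MonomialModule k U V} (hx : φ x = 0) :
    φ (divVar hU hV (r • x)) = r • φ (divVar hU hV x) := by
  induction r using MvPolynomial.induction_on generalizing x with
  | C c => rw [divVar_C_smul, map_smul]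
  | add p q hp hq => rw [add_smul, map_add, map_add, hp hx, hq hx, add_smul]
  | mul_X p i hp =>
    have hX : φ (divVar hU hV ((X i : MvPolynomial σ k) • x)) = 0 := by
      obtain rfl | hij := eq_or_ne i j
      · rwa [divVar_X_smul]
      · rw [divVar_X_smul_of_ne hU hV hij, map_smul, smul_quotient_eq_zero (X_mem_idealOfVars i)]
    rw [mul_smul, hp (by rw [map_smul, hx, smul_zero]), hX, mul_smul,
      smul_quotient_eq_zero (X_mem_idealOfVars i)]

theorem exists_functional_ker_eq_of_avoidsVar (hU : AvoidsVar U j) (hV : AvoidsVar V j)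
    (φ : MonomialModule k U V →ₗ[MvPolynomial σ k] MvPolynomial σ k ⧸ idealOfVars σ k) :
    ∃ ψ : LinearMap.ker φ →ₗ[MvPolynomial σ k] MvPolynomial σ k ⧸ idealOfVars σ k,
      ∀ x (y : LinearMap.ker φ), (y : MonomialModule k U V) = (X j : MvPolynomial σ k) • x →
        ψ y = φ x :=
  ⟨{ toFun y := φ (divVar hU hV y)
     map_add' y z := by rw [Submodule.coe_add, map_add, map_add]
     map_smul' r y := map_divVar_smul_of_map_eq_zero hU hV φ r y.2 },
    fun x y hy => by rw [LinearMap.coe_mk, AddHom.coe_mk, hy, divVar_X_smul]⟩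

end DivVar

section VariableStep

variable {σ k : Type u} [CommRing k] {U V V' : UpperSet (σ →₀ ℕ)} {j : σ}

theorem idealOfVars_eq_ker_constantCoeff (σ k : Type*) [CommRing k] :
    idealOfVars σ k = RingHom.ker (constantCoeff : MvPolynomial σ k →+* k) := by
  ext p
  rw [← pow_one (idealOfVars σ k), mem_pow_idealOfVars_iff', RingHom.mem_ker, constantCoeff_eq]
  refine ⟨fun h => h 0 (by rw [map_zero]; exact one_pos), fun h u hu => ?_⟩
  rw [Nat.lt_one_iff, Finsupp.degree_eq_zero_iff] at hu
  rwa [hu]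

instance isMaximal_idealOfVars {σ k : Type*} [Field k] : (idealOfVars σ k).IsMaximal :=
  idealOfVars_eq_ker_constantCoeff σ k ▸
    RingHom.ker_isMaximal_of_surjective _ fun c => ⟨C c, constantCoeff_C _ c⟩

/-- All Ext modules of `M` into `R ⧸ 𝔪` are linear, with Betti numbers `binom N i * c`. -/
def HasBinomialBetti {R : Type u} [CommRing R] (𝔪 : Ideal R) (N c : ℕ) (M : Type u)
    [AddCommGroup M] [Module R M] : Prop :=
  ∀ i, IsLinearAt 𝔪 i M ∧ extBetti 𝔪 i M = (N.choose i * c : ℕ)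

theorem isShortExact_X_smul (hV : AvoidsVar V j)
    (hV' : ∀ u ∈ U, (u ∈ V' ↔ u ∈ V ∨ u j ≠ 0)) (hU : AvoidsVar U j) :
    IsShortExact ((X j : MvPolynomial σ k) • (LinearMap.id : MonomialModule k U V →ₗ[_] _))
      (monomialProj (V' := V') fun u hu huV => (hV' u hu).mpr (Or.inl huV)) := by
  have hmulU : ∀ u ∈ U, u + Finsupp.single j 1 ∈ U := fun u hu => add_mem_of_mem hu _
  have hmulV : ∀ u ∈ U, (u ∈ V ↔ u + Finsupp.single j 1 ∈ V) :=
    fun u _ => ⟨fun hu => add_mem_of_mem hu _, hV u⟩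
  have hstep : ∀ u ∈ U, (u ∈ V' ↔ u ∈ V ∨ ∃ w ∈ U, u = w + Finsupp.single j 1) := by
    refine fun u hu => (hV' u hu).trans (or_congr_right ⟨hU.exists_eq_add_single hu, ?_⟩)
    rintro ⟨w, -, rfl⟩
    simp only [Finsupp.add_apply, Finsupp.single_eq_same, ne_eq, Nat.add_eq_zero_iff,
      one_ne_zero, and_false, not_false_eq_true]
  rw [X, ← mulMonomial_self_eq_smul hmulU hmulV]
  exact isShortExact_mulMonomial hmulU hmulV hstep

theorem IsLinearAt.adjoin_var {k : Type u} [Field k] {i : ℕ}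
    (hU : AvoidsVar U j) (hV : AvoidsVar V j) (hV' : ∀ u ∈ U, (u ∈ V' ↔ u ∈ V ∨ u j ≠ 0))
    (h : IsLinearAt (idealOfVars σ k) i (MonomialModule k U V))
    (h' : IsLinearAt (idealOfVars σ k) (i + 1) (MonomialModule k U V)) :
    IsLinearAt (idealOfVars σ k) (i + 1) (MonomialModule k U V') :=
  .of_smul_id (X_mem_idealOfVars j) (isShortExact_X_smul hV hV' hU)
    (exists_functional_ker_eq_of_avoidsVar hU hV) h h'

theorem extBetti_zero_adjoin_var (hU : AvoidsVar U j) (hV : AvoidsVar V j)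
    (hV' : ∀ u ∈ U, (u ∈ V' ↔ u ∈ V ∨ u j ≠ 0)) :
    extBetti (idealOfVars σ k) 0 (MonomialModule k U V') =
      extBetti (idealOfVars σ k) 0 (MonomialModule k U V) :=
  (isShortExact_X_smul hV hV' hU).extBetti_zero_of_smul (X_mem_idealOfVars j)

theorem extBetti_succ_adjoin_var (hU : AvoidsVar U j) (hV : AvoidsVar V j)
    (hV' : ∀ u ∈ U, (u ∈ V' ↔ u ∈ V ∨ u j ≠ 0)) (i : ℕ) :
    extBetti (idealOfVars σ k) (i + 1) (MonomialModule k U V') =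
      extBetti (idealOfVars σ k) i (MonomialModule k U V) +
        extBetti (idealOfVars σ k) (i + 1) (MonomialModule k U V) :=
  (isShortExact_X_smul hV hV' hU).extBetti_succ_of_smul (X_mem_idealOfVars j) i

theorem HasBinomialBetti.adjoin_var {k : Type u} [Field k] {N c : ℕ}
    (hU : AvoidsVar U j) (hV : AvoidsVar V j) (hV' : ∀ u ∈ U, (u ∈ V' ↔ u ∈ V ∨ u j ≠ 0))
    (h : HasBinomialBetti (idealOfVars σ k) N c (MonomialModule k U V)) :
    HasBinomialBetti (idealOfVars σ k) (N + 1) c (MonomialModule k U V') := by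
  rintro (_ | i)
  · exact ⟨isLinearAt_zero, by
      rw [extBetti_zero_adjoin_var hU hV hV', (h 0).2, Nat.choose_zero_right,
        Nat.choose_zero_right]⟩
  · refine ⟨(h i).1.adjoin_var hU hV hV' (h (i + 1)).1, ?_⟩
    rw [extBetti_succ_adjoin_var hU hV hV', (h i).2, (h (i + 1)).2, ← Nat.cast_add, ← add_mul,
      ← Nat.choose_succ_succ]

end VariableStep

section GeneratedInDegree

open MonomialModule

variable {σ k : Type u} [CommRing k] {U V W V₁ : UpperSet (σ →₀ ℕ)} {d : ℕ}

theorem IsGeneratedInDegree.le_degree (hU : IsGeneratedInDegree U d) {u : σ →₀ ℕ} (hu : u ∈ U) :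
    d ≤ u.degree := by
  obtain ⟨w, -, hwu, rfl⟩ := hU u hu
  exact Finsupp.degree_mono hwu

theorem IsGeneratedInDegree.exists_eq_add_single (hU : IsGeneratedInDegree U d) {u : σ →₀ ℕ}
    (hu : u ∈ U) (hd : d < u.degree) : ∃ j, ∃ w ∈ U, u = w + Finsupp.single j 1 := by
  obtain ⟨w, hw, hwu, rfl⟩ := hU u hu
  obtain ⟨v, rfl⟩ := exists_add_of_le hwu
  have hv : v ≠ 0 := by
    rintro rfl
    exact hd.ne (by rw [add_zero])
  obtain ⟨j, hj⟩ := Finsupp.ne_iff.mp hv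
  obtain ⟨v', rfl⟩ := exists_add_of_le
    (Finsupp.single_le_iff.mpr (Nat.one_le_iff_ne_zero.mpr hj))
  exact ⟨j, w + v', add_mem_of_mem hw v', by rw [add_assoc, add_comm v']⟩

theorem smul_top_le_map_pow (hd : ∀ u ∈ U, d ≤ u.degree) :
    idealOfVars σ k • (⊤ : Submodule (MvPolynomial σ k) (MonomialModule k U V)) ≤
      ((idealOfVars σ k ^ (d + 1)).submoduleOf (monomialIdeal k U)).map (mk V) := by
  refine Submodule.smul_le.mpr fun r hr x _ => ?_
  obtain ⟨p, rfl⟩ := mk_surjective x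
  have hp : (p : MvPolynomial σ k) ∈ idealOfVars σ k ^ d :=
    (mem_pow_idealOfVars_iff _ _).mpr fun u hu =>
      hd u (mem_monomialIdeal.mp p.2 u (mem_support_iff.mp hu))
  exact ⟨r • p, by rw [pow_succ']; exact Ideal.mul_mem_mul hr hp, rfl⟩

theorem IsGeneratedInDegree.mk_mem_smul_top (hU : IsGeneratedInDegree U d) (p : monomialIdeal k U)
    (hp : ∀ u, coeff u (p : MvPolynomial σ k) ≠ 0 → u ∈ V ∨ d < u.degree) :
    mk V p ∈ idealOfVars σ k • (⊤ : Submodule (MvPolynomial σ k) (MonomialModule k U V)) := by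
  suffices (p : MvPolynomial σ k) ∈ Submodule.map (monomialIdeal k U).subtype
      ((idealOfVars σ k • ⊤ : Submodule _ (MonomialModule k U V)).comap (mk V)) by
    obtain ⟨q, hq, hqp⟩ := this
    exact Subtype.ext hqp ▸ hq
  refine mem_ideal_of_monomial_mem fun u hu => ?_
  have huU := mem_monomialIdeal.mp p.2 u hu
  refine ⟨⟨monomial u 1, monomial_mem_monomialIdeal huU 1⟩, ?_, rfl⟩
  obtain huV | hud := hp u hu
  · rw [SetLike.mem_coe, Submodule.mem_comap,
      mk_eq_zero_iff.mpr (monomial_mem_monomialIdeal huV 1)]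
    exact zero_mem _
  · obtain ⟨j, w, hw, rfl⟩ := hU.exists_eq_add_single huU hud
    have hX : (⟨monomial (w + Finsupp.single j 1) 1, monomial_mem_monomialIdeal huU 1⟩ :
        monomialIdeal k U) = (X j : MvPolynomial σ k) •
          ⟨monomial w 1, monomial_mem_monomialIdeal hw 1⟩ := by
      refine Subtype.ext ?_
      change monomial (w + Finsupp.single j 1) (1 : k) = X j * monomial w 1
      rw [X, monomial_mul, one_mul, add_comm]
    rw [SetLike.mem_coe, Submodule.mem_comap, hX, map_smul]
    exact Submodule.smul_mem_smul (X_mem_idealOfVars j) Submodule.mem_top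

/-- Functionals extend along `mulMonomial` because both modules have their generators in the lowest
degree. -/
theorem lcomp_mulMonomial_surjective {k : Type u} [Field k] {e : σ →₀ ℕ}
    (hW : ∀ w ∈ W, w + e ∈ U) (hV : ∀ w ∈ W, (w ∈ V₁ ↔ w + e ∈ V))
    (hgen : IsGeneratedInDegree W d) (hd : ∀ u ∈ U, d + e.degree ≤ u.degree) :
    Function.Surjective ((mulMonomial (k := k) e hW hV).lcomp (MvPolynomial σ k)
      (MvPolynomial σ k ⧸ idealOfVars σ k)) := by
  refine lcomp_surjective_of_mem_smul_top fun x hx => ?_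
  obtain ⟨p, rfl⟩ := mk_surjective x
  obtain ⟨q, hq, hqp⟩ := smul_top_le_map_pow hd hx
  refine hgen.mk_mem_smul_top p fun w hw => ?_
  by_contra! hcon
  have hqw : coeff (w + e) (q : MvPolynomial σ k) = 0 :=
    (mem_pow_idealOfVars_iff' (d + e.degree + 1) _).mp hq _ (by rw [map_add]; omega)
  have hmem := (mulMonomial_mk_eq_mk_iff hW hV).mp hqp.symm
  refine hcon.1 ((hV w (mem_monomialIdeal.mp p.2 w hw)).mpr
    (mem_monomialIdeal.mp hmem (w + e) ?_))
  rwa [coeff_sub, hqw, sub_zero, add_comm, coeff_monomial_mul, one_mul]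

end GeneratedInDegree

/-! ### Sparse monomials -/

section HasSparseSubset

/-- `S ∩ [p, r)` contains `a` elements, any two of which differ by at least two; the recursion
chooses them from left to right. -/
def HasSparseSubset (S : Set ℕ) : ℕ → ℕ → ℕ → Prop
  | 0, _, _ => True
  | a + 1, p, r => ∃ t, p ≤ t ∧ t < r ∧ t ∈ S ∧ HasSparseSubset S a (t + 2) r

variable {S S' : Set ℕ} {a p p' r r' : ℕ}

namespace HasSparseSubset

theorem mono (h : HasSparseSubset S a p r) (hp : p' ≤ p) (hr : r ≤ r')
    (hS : ∀ t ∈ S, p ≤ t → t < r → t ∈ S') : HasSparseSubset S' a p' r' := by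
  induction a generalizing p p' with
  | zero => trivial
  | succ a ih =>
    obtain ⟨t, hpt, htr, htS, h⟩ := h
    exact ⟨t, hp.trans hpt, htr.trans_le hr, hS t htS hpt htr,
      ih h le_rfl fun s hs hts => hS s hs (by omega)⟩

theorem mono_interval (h : HasSparseSubset S a p r) (hp : p' ≤ p) (hr : r ≤ r') :
    HasSparseSubset S a p' r' :=
  h.mono hp hr fun _ ht _ _ => ht

theorem length_le (h : HasSparseSubset S a p r) (ha : 0 < a) : p + 2 * a ≤ r + 1 := by
  induction a generalizing p with
  | zero => exact absurd ha (lt_irrefl 0)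
  | succ a ih =>
    obtain ⟨t, hpt, htr, -, h⟩ := h
    obtain rfl | ha := a.eq_zero_or_pos
    · omega
    · have := ih h ha
      omega

theorem drop_left (h : HasSparseSubset S (a + 1) p r) : HasSparseSubset S a (p + 2) r := by
  obtain ⟨t, hpt, -, -, h⟩ := h
  exact h.mono_interval (by omega) le_rfl

end HasSparseSubset

theorem hasSparseSubset_succ_left (hpr : p < r) : HasSparseSubset S (a + 1) p r ↔
    HasSparseSubset S (a + 1) (p + 1) r ∨ p ∈ S ∧ HasSparseSubset S a (p + 2) r := by
  constructor
  · rintro ⟨t, hpt, htr, htS, h⟩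
    obtain rfl | hlt := hpt.eq_or_lt
    · exact Or.inr ⟨htS, h⟩
    · exact Or.inl ⟨t, hlt, htr, htS, h⟩
  · rintro (h | ⟨hp, h⟩)
    · exact h.mono_interval p.le_succ le_rfl
    · exact ⟨p, le_rfl, hpr, hp, h⟩

theorem hasSparseSubset_succ_right (hpr : p ≤ r + 1) : HasSparseSubset S (a + 1) p (r + 2) ↔
    HasSparseSubset S (a + 1) p (r + 1) ∨ r + 1 ∈ S ∧ HasSparseSubset S a p r := by
  constructor
  · intro h
    clear hpr
    induction a generalizing p with
    | zero =>
      obtain ⟨t, hpt, htr, htS, -⟩ := h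
      obtain rfl | hlt := (Nat.le_of_lt_succ htr).eq_or_lt
      · exact Or.inr ⟨htS, trivial⟩
      · exact Or.inl ⟨t, hpt, hlt, htS, trivial⟩
    | succ a ih =>
      obtain ⟨t, hpt, -, htS, h⟩ := h
      have hlen := h.length_le a.succ_pos
      exact (ih h).imp (fun h => ⟨t, hpt, by omega, htS, h⟩)
        (And.imp_right fun h => ⟨t, hpt, by omega, htS, h⟩)
  · rintro (h | ⟨hr, h⟩)
    · exact h.mono_interval le_rfl (Nat.le_succ _)
    · induction a generalizing p with
      | zero => exact ⟨r + 1, hpr, Nat.lt_succ_self _, hr, trivial⟩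
      | succ a ih =>
        obtain ⟨t, hpt, htr, htS, h⟩ := h
        exact ⟨t, hpt, by omega, htS, ih (by omega) h⟩

theorem HasSparseSubset.drop_right (h : HasSparseSubset S (a + 1) p (r + 2)) :
    HasSparseSubset S a p r := by
  have hlen := h.length_le a.succ_pos
  obtain h | ⟨-, h⟩ := (hasSparseSubset_succ_right (by omega)).mp h
  · induction a generalizing p with
    | zero => trivial
    | succ a ih =>
      obtain ⟨t, hpt, htr, htS, h⟩ := h
      have hlen := h.length_le a.succ_pos
      exact ⟨t, hpt, by omega, htS, ih (h.mono_interval le_rfl (Nat.le_succ _)) (by omega) h⟩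
  · exact h

theorem hasSparseSubset_iff_of_tight (hr : r + 1 = p + 2 * a) :
    HasSparseSubset S a p r ↔ ∀ j < a, p + 2 * j ∈ S := by
  induction a generalizing p with
  | zero => exact iff_of_true trivial fun j hj => absurd hj (Nat.not_lt_zero j)
  | succ a ih =>
    have hlong : ¬HasSparseSubset S (a + 1) (p + 1) r := fun h => by
      have := h.length_le a.succ_pos
      omega
    rw [hasSparseSubset_succ_left (by omega), or_iff_right hlong, ih (by omega),
      Nat.forall_lt_succ_left']
    exact and_congr_right' (forall₂_congr fun j _ => by rw [mul_add, add_assoc, add_comm 2])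

/-- Two chains in `[p, r]` of consecutive lengths are spliced at the leftmost place where they can
be exchanged, freeing one of the two ends. -/
theorem HasSparseSubset.splice (h : HasSparseSubset S (a + 1) p (r + 1))
    (h' : HasSparseSubset S a (p + 1) r) (hr : p + 2 * a + 1 ≤ r) :
    HasSparseSubset S (a + 1) (p + 1) (r + 1) ∨ HasSparseSubset S (a + 1) p r := by
  induction a generalizing p with
  | zero =>
    obtain ⟨t, hpt, htr, htS, -⟩ := h
    obtain hlt | hle := lt_or_ge t r
    · exact Or.inr ⟨t, hpt, hlt, htS, trivial⟩
    · exact Or.inl ⟨t, by omega, htr, htS, trivial⟩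
  | succ a ih =>
    obtain h | ⟨hp, h⟩ := (hasSparseSubset_succ_left (by omega)).mp h
    · exact Or.inl h
    obtain ⟨t, hpt, htr, htS, ht⟩ := h'
    have hcons {q : ℕ} : HasSparseSubset S (a + 1) (p + 2) q → p < q →
        HasSparseSubset S (a + 2) p q := fun h hq => ⟨p, le_rfl, hq, hp, h⟩
    obtain h | h := ih h (ht.mono_interval (by omega) le_rfl) (by omega)
    · obtain rfl | hlt := hpt.eq_or_lt
      · exact Or.inl ⟨p + 1, le_rfl, by omega, htS, h⟩
      · exact Or.inr (hcons ⟨t, hlt, htr, htS, ht⟩ (by omega))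
    · exact Or.inr (hcons h (by omega))

end HasSparseSubset

section SparseUpperSet

variable {n : ℕ} {u : Fin n →₀ ℕ} {a p r : ℕ} {j : Fin n}

/-- The indices of the variables dividing the monomial `x^u`, as natural numbers. -/
def varSupport (u : Fin n →₀ ℕ) : Set ℕ :=
  {t | ∃ h : t < n, u ⟨t, h⟩ ≠ 0}

theorem val_mem_varSupport : (j : ℕ) ∈ varSupport u ↔ u j ≠ 0 :=
  ⟨fun ⟨_, h⟩ => h, fun h => ⟨j.2, h⟩⟩

theorem varSupport_mono : Monotone (varSupport : (Fin n →₀ ℕ) → Set ℕ) :=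
  fun _ _ huv t ⟨ht, h⟩ => ⟨ht, fun h0 => h (Nat.le_zero.mp ((huv ⟨t, ht⟩).trans h0.le))⟩

theorem varSupport_add (u v : Fin n →₀ ℕ) : varSupport (u + v) = varSupport u ∪ varSupport v := by
  ext t
  simp only [varSupport, Finsupp.add_apply, ne_eq, Nat.add_eq_zero_iff, Set.mem_union,
    Set.mem_ofPred_eq, ← exists_or, not_and_or]

theorem varSupport_single (j : Fin n) : varSupport (single j 1) = {(j : ℕ)} := by
  ext t
  simp only [varSupport, Finsupp.single_apply, Set.mem_ofPred_eq, Set.mem_singleton_iff, ne_eq,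
    ite_eq_right_iff, one_ne_zero, imp_false, not_not, Fin.ext_iff]
  exact ⟨fun ⟨_, h⟩ => h.symm, fun h => ⟨h ▸ j.2, h.symm⟩⟩

/-- The exponents of the monomials divisible by a product of `a` variables whose indices lie in
`[p, r)` and differ pairwise by at least two: the monomials of `I_{a,p+1,r}`, since the variables
of `k[x_1, …, x_n]` are indexed by `Fin n` from zero. -/
def sparseUpperSet (n a p r : ℕ) : UpperSet (Fin n →₀ ℕ) where
  carrier := {u | HasSparseSubset (varSupport u) a p r}
  upper' _ _ huv hu := hu.mono le_rfl le_rfl fun _ ht _ _ => varSupport_mono huv ht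

theorem mem_sparseUpperSet : u ∈ sparseUpperSet n a p r ↔ HasSparseSubset (varSupport u) a p r :=
  Iff.rfl

theorem avoidsVar_sparseUpperSet (hj : (j : ℕ) < p ∨ r ≤ j) :
    AvoidsVar (sparseUpperSet n a p r) j :=
  fun u hu => mem_sparseUpperSet.mpr <| (mem_sparseUpperSet.mp hu).mono le_rfl le_rfl
    fun t ht hpt htr => by
      rw [varSupport_add, varSupport_single] at ht
      exact ht.resolve_right fun (h : t = j) => by omega

theorem mem_sparseUpperSet_succ : u ∈ sparseUpperSet n (a + 1) p r ↔ ∃ j : Fin n, p ≤ j ∧ j < r ∧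
    ∃ w ∈ sparseUpperSet n a (j + 2) r, u = w + single j 1 := by
  constructor
  · rintro ⟨t, hpt, htr, ⟨htn, htu⟩, h⟩
    obtain ⟨w, hw, rfl⟩ := (avoidsVar_sparseUpperSet (j := ⟨t, htn⟩)
      (Or.inl (Nat.lt_add_of_pos_right two_pos))).exists_eq_add_single h htu
    exact ⟨⟨t, htn⟩, hpt, htr, w, hw, rfl⟩
  · rintro ⟨j, hpj, hjr, w, hw, rfl⟩
    exact ⟨j, hpj, hjr, by rw [varSupport_add, varSupport_single]; exact Or.inr rfl,
      add_mem_of_mem hw _⟩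

theorem isGeneratedInDegree_sparseUpperSet : IsGeneratedInDegree (sparseUpperSet n a p r) a := by
  intro u hu
  induction a generalizing u p with
  | zero => exact ⟨0, trivial, zero_le, map_zero _⟩
  | succ a ih =>
    obtain ⟨j, hpj, hjr, w, hw, rfl⟩ := mem_sparseUpperSet_succ.mp hu
    obtain ⟨v, hv, hvw, hdeg⟩ := ih w hw
    exact ⟨v + single j 1, mem_sparseUpperSet_succ.mpr ⟨j, hpj, hjr, v, hv, rfl⟩,
      add_le_add_left hvw _, by rw [map_add, hdeg, Finsupp.degree_single]⟩

end SparseUpperSet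

section BinomialBetti

variable {R : Type u} [CommRing R] {𝔪 : Ideal R} {A B C : Type u} [AddCommGroup A] [Module R A]
  [AddCommGroup B] [Module R B] [AddCommGroup C] [Module R C] {N c c' : ℕ}

theorem HasBinomialBetti.congr (h : HasBinomialBetti 𝔪 N c A) (e : A ≃ₗ[R] B) :
    HasBinomialBetti 𝔪 N c B :=
  fun i => ⟨(h i).1.congr e, (extBetti_congr 𝔪 e).symm.trans (h i).2⟩

theorem hasBinomialBetti_of_subsingleton [Subsingleton A] : HasBinomialBetti 𝔪 N 0 A := fun i =>
  have : Subsingleton (ResidueExt 𝔪 i A) := subsingleton_residueExt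
  ⟨isLinearAt_of_subsingleton_ext, by rw [extBetti_of_subsingleton, mul_zero, Nat.cast_zero]⟩

theorem hasBinomialBetti_self [𝔪.IsMaximal] : HasBinomialBetti 𝔪 0 1 R := by
  refine fun i => ⟨isLinearAt_self 𝔪, ?_⟩
  cases i with
  | zero => rw [extBetti_self_zero, Nat.choose_self, mul_one, Nat.cast_one]
  | succ i => rw [extBetti_self_succ, Nat.choose_zero_succ, zero_mul, Nat.cast_zero]

theorem HasBinomialBetti.of_isShortExact {f : A →ₗ[R] B} {g : B →ₗ[R] C}
    (hA : HasBinomialBetti 𝔪 N c A) (hC : HasBinomialBetti 𝔪 N c' C) (h : IsShortExact f g)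
    (hf : Function.Surjective (f.lcomp R (R ⧸ 𝔪))) : HasBinomialBetti 𝔪 N (c + c') B := by
  refine fun i => ⟨(hA i).1.of_isShortExact (hC i).1 h hf, ?_⟩
  rw [extBetti_eq_add_of_isLinearAt h hf (fun i => (hA i).1), (hA i).2, (hC i).2, mul_add,
    Nat.cast_add]

end BinomialBetti

section MonomialSMul

variable {σ k : Type u} [CommRing k] {U V V' W : UpperSet (σ →₀ ℕ)} {e : σ →₀ ℕ}

theorem monomial_mem_idealOfVars (he : e ≠ 0) :
    (monomial e 1 : MvPolynomial σ k) ∈ idealOfVars σ k := by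
  obtain ⟨j, hj⟩ := Finsupp.ne_iff.mp he
  obtain ⟨v, rfl⟩ := exists_add_of_le
    (Finsupp.single_le_iff.mpr (Nat.one_le_iff_ne_zero.mpr hj))
  rw [← one_mul (1 : k), ← monomial_mul]
  exact Ideal.mul_mem_right _ _ (X_mem_idealOfVars j)

theorem isShortExact_monomial_smul (hWU : ∀ w ∈ W, w ∈ U) (hV : ∀ w ∈ W, (w ∈ V ↔ w + e ∈ V))
    (hV' : ∀ u ∈ U, (u ∈ V' ↔ u ∈ V ∨ ∃ w ∈ W, u = w + e)) :
    IsShortExact ((monomial e 1 : MvPolynomial σ k) • mulMonomial (k := k) (V₁ := V) (V := V) 0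
        (fun w hw => add_mem_of_mem (hWU w hw) 0) fun _ _ => by rw [add_zero])
      (monomialProj (V' := V') fun u hu huV => (hV' u hu).mpr (Or.inl huV)) := by
  have hW : ∀ w ∈ W, w + e ∈ U := fun w hw => add_mem_of_mem (hWU w hw) e
  rw [← mulMonomial_eq_smul (k := k) hW hV hWU fun _ _ => Iff.rfl]
  exact isShortExact_mulMonomial hW hV hV'

theorem extBetti_zero_adjoin_monomial (he : e ≠ 0) (hWU : ∀ w ∈ W, w ∈ U)
    (hV : ∀ w ∈ W, (w ∈ V ↔ w + e ∈ V))
    (hV' : ∀ u ∈ U, (u ∈ V' ↔ u ∈ V ∨ ∃ w ∈ W, u = w + e)) :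
    extBetti (idealOfVars σ k) 0 (MonomialModule k U V') =
      extBetti (idealOfVars σ k) 0 (MonomialModule k U V) :=
  (isShortExact_monomial_smul hWU hV hV').extBetti_zero_of_smul (monomial_mem_idealOfVars he)

theorem extBetti_succ_adjoin_monomial (he : e ≠ 0) (hWU : ∀ w ∈ W, w ∈ U)
    (hV : ∀ w ∈ W, (w ∈ V ↔ w + e ∈ V))
    (hV' : ∀ u ∈ U, (u ∈ V' ↔ u ∈ V ∨ ∃ w ∈ W, u = w + e)) (i : ℕ) :
    extBetti (idealOfVars σ k) (i + 1) (MonomialModule k U V') =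
      extBetti (idealOfVars σ k) i (MonomialModule k W V) +
        extBetti (idealOfVars σ k) (i + 1) (MonomialModule k U V) :=
  (isShortExact_monomial_smul hWU hV hV').extBetti_succ_of_smul (monomial_mem_idealOfVars he) i

end MonomialSMul

section SparseModule

variable {n : ℕ} {u : Fin n →₀ ℕ} {a b p r : ℕ}

theorem mem_sparseUpperSet_succ_left_of_mem (hp : p < n) (hpr : p < r)
    (hu : u ∈ sparseUpperSet n a (p + 2) r) : u ∈ sparseUpperSet n (a + 1) p r ↔
      u ∈ sparseUpperSet n (a + 1) (p + 1) r ∨ u ⟨p, hp⟩ ≠ 0 :=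
  (hasSparseSubset_succ_left hpr).trans <| or_congr_right <|
    (and_iff_left hu).trans (val_mem_varSupport (j := ⟨p, hp⟩))

theorem mem_sparseUpperSet_succ_left (hp : p < n) (hpr : p < r) :
    u ∈ sparseUpperSet n (a + 1) p r ↔ u ∈ sparseUpperSet n (a + 1) (p + 1) r ∨
      ∃ w ∈ sparseUpperSet n a (p + 2) r, u = w + single ⟨p, hp⟩ 1 := by
  refine (hasSparseSubset_succ_left hpr).trans (or_congr_right ⟨fun ⟨hpu, hu⟩ => ?_, ?_⟩)
  · exact (avoidsVar_sparseUpperSet (Or.inl (Nat.lt_add_of_pos_right two_pos))).exists_eq_add_single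
      hu (val_mem_varSupport (j := ⟨p, hp⟩).mp hpu)
  · rintro ⟨w, hw, rfl⟩
    exact ⟨by rw [varSupport_add, varSupport_single]; exact Or.inr rfl, add_mem_of_mem hw _⟩

theorem notMem_sparseUpperSet_of_lt (h : r < p + 2 * b + 1) : u ∉ sparseUpperSet n (b + 1) p r :=
  fun hu => by
    have := HasSparseSubset.length_le hu b.succ_pos
    omega

/-- The module `I_{b,[p+1,r)} ⧸ I_{b+1,[p,r)}`, with the intervals as in `sparseUpperSet`. -/
abbrev LeftSparseModule (k : Type) [CommRing k] (n b p r : ℕ) : Type :=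
  MonomialModule k (sparseUpperSet n b (p + 1) r) (sparseUpperSet n (b + 1) p r)

variable {k : Type} [Field k] {N c : ℕ}

theorem HasBinomialBetti.adjoin_left (hp : p < n) (hpr : p < r)
    (h : HasBinomialBetti (idealOfVars (Fin n) k) N c (LeftSparseModule k n b (p + 1) r)) :
    HasBinomialBetti (idealOfVars (Fin n) k) (N + 1) c
      (MonomialModule k (sparseUpperSet n b (p + 2) r) (sparseUpperSet n (b + 1) p r)) :=
  h.adjoin_var (j := ⟨p, hp⟩) (avoidsVar_sparseUpperSet (Or.inl (by simp only; omega)))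
    (avoidsVar_sparseUpperSet (Or.inl p.lt_succ_self))
    fun _ hu => mem_sparseUpperSet_succ_left_of_mem hp hpr hu

theorem HasBinomialBetti.leftSparseModule_succ {c' : ℕ} (hp : p + 1 < r) (hr : r ≤ n)
    (hA : HasBinomialBetti (idealOfVars (Fin n) k) N c
      (MonomialModule k (sparseUpperSet n (b + 1) (p + 2) r) (sparseUpperSet n (b + 2) p r)))
    (hC : HasBinomialBetti (idealOfVars (Fin n) k) N c' (LeftSparseModule k n b (p + 2) r)) :
    HasBinomialBetti (idealOfVars (Fin n) k) N (c + c') (LeftSparseModule k n (b + 1) p r) := by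
  have hp' : p + 1 < n := hp.trans_le hr
  have hV : ∀ u ∈ sparseUpperSet n (b + 2) p r, u ∈ sparseUpperSet n (b + 1) (p + 2) r :=
    fun _ => HasSparseSubset.drop_left
  have hsub : ∀ u ∈ sparseUpperSet n (b + 1) (p + 2) r,
      u + 0 ∈ sparseUpperSet n (b + 1) (p + 1) r :=
    fun _ hu => add_mem_of_mem (hu.mono_interval (Nat.le_succ _) le_rfl) 0
  have hexact := isShortExact_mulMonomial (k := k) (V := sparseUpperSet n (b + 2) p r)
    (V' := sparseUpperSet n (b + 1) (p + 2) r) hsub (fun u _ => by rw [add_zero])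
    fun u _ => by
      simp only [add_zero, exists_eq_right', or_iff_right_of_imp (hV u)]
  refine hA.of_isShortExact (hC.congr ?_) hexact <| lcomp_mulMonomial_surjective _ _
    isGeneratedInDegree_sparseUpperSet fun u hu => ?_
  · exact mulMonomialEquiv (e := single ⟨p + 1, hp'⟩ 1)
      (fun w hw => (mem_sparseUpperSet_succ_left hp' hp).mpr (Or.inr ⟨w, hw, rfl⟩))
      (fun w _ => ⟨fun hw => add_mem_of_mem hw _,
        avoidsVar_sparseUpperSet (Or.inl (Nat.lt_succ_self _)) w⟩)
      fun u hu => (mem_sparseUpperSet_succ_left hp' hp).mp hu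
  · rw [map_zero, add_zero]
    exact isGeneratedInDegree_sparseUpperSet.le_degree hu

theorem hasBinomialBetti_leftSparseModule (N b : ℕ) {p r : ℕ} (hr : r = p + 2 * b + N)
    (hn : r ≤ n) : HasBinomialBetti (idealOfVars (Fin n) k) N ((N + b).choose b)
      (LeftSparseModule k n b p r) := by
  induction N generalizing b p with
  | zero =>
    induction b generalizing p with
    | zero =>
      exact hasBinomialBetti_self.congr
        (freeEquivMonomialModule fun _ => notMem_sparseUpperSet_of_lt (by omega))
    | succ b ih =>
      have : Subsingleton (MonomialModule k (sparseUpperSet n (b + 1) (p + 2) r)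
          (sparseUpperSet n (b + 2) p r)) :=
        subsingleton_monomialModule fun u hu => absurd hu (notMem_sparseUpperSet_of_lt (by omega))
      have := hasBinomialBetti_of_subsingleton.leftSparseModule_succ (by omega) hn
        (ih (p := p + 2) (by omega))
      simpa only [zero_add, Nat.choose_self] using this
  | succ N ihN =>
    induction b generalizing p with
    | zero =>
      have := (ihN 0 (p := p + 1) (by omega)).adjoin_left (by omega) (by omega)
      rwa [Nat.choose_zero_right] at this ⊢
    | succ b ih =>
      have hA := (ihN (b + 1) (p := p + 1) (by omega)).adjoin_left (by omega) (by omega)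
      have := hA.leftSparseModule_succ (by omega) hn (ih (p := p + 2) (by omega))
      have hpascal : (N + (b + 1)).choose (b + 1) + (N + 1 + b).choose b =
          (N + 1 + (b + 1)).choose (b + 1) := by
        rw [Nat.add_right_comm N 1 b, add_assoc, add_comm, ← Nat.choose_succ_succ,
          Nat.add_right_comm]
      rwa [hpascal] at this

theorem choose_mul_choose_eq (N b i : ℕ) :
    N.choose i * (N + b).choose b = (b + N).choose (b + i) * (b + i).choose b := by
  rw [Nat.choose_mul (Nat.le_add_right b i), Nat.add_sub_cancel_left, Nat.add_sub_cancel_left,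
    mul_comm, add_comm N b]

theorem single_one_ne_zero {σ : Type*} (j : σ) : (single j 1 : σ →₀ ℕ) ≠ 0 :=
  Finsupp.single_ne_zero.mpr one_ne_zero

theorem extBetti_zero_quotient_sparse (N b : ℕ) {p r : ℕ} (hr : r = p + 2 * b + N) (hn : r ≤ n) :
    extBetti (idealOfVars (Fin n) k) 0 (MonomialModule k ⊥ (sparseUpperSet n (b + 1) p r)) = 1 := by
  induction N generalizing p with
  | zero =>
    rw [← extBetti_congr _ (freeEquivMonomialModule fun _ =>
      notMem_sparseUpperSet_of_lt (by omega)), extBetti_self_zero]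
  | succ N ih =>
    rw [← ih (p := p + 1) (by omega)]
    have hp : p < n := by omega
    exact extBetti_zero_adjoin_monomial (W := sparseUpperSet n b (p + 2) r)
      (single_one_ne_zero (⟨p, hp⟩ : Fin n)) (fun _ _ => UpperSet.mem_bot)
      (fun w _ => ⟨fun hw => add_mem_of_mem hw _,
        avoidsVar_sparseUpperSet (Or.inl p.lt_succ_self) w⟩)
      fun u _ => mem_sparseUpperSet_succ_left hp (by omega)

theorem extBetti_succ_quotient_sparse (N b i : ℕ) {p r : ℕ} (hr : r = p + 2 * b + N) (hn : r ≤ n) :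
    extBetti (idealOfVars (Fin n) k) (i + 1) (MonomialModule k ⊥ (sparseUpperSet n (b + 1) p r)) =
      ((b + N).choose (b + i + 1) * (b + i).choose b : ℕ) := by
  induction N generalizing p with
  | zero =>
    rw [← extBetti_congr _ (freeEquivMonomialModule fun _ =>
      notMem_sparseUpperSet_of_lt (by omega)), extBetti_self_succ,
      Nat.choose_eq_zero_of_lt (by omega), zero_mul, Nat.cast_zero]
  | succ N ih =>
    have hp : p < n := by omega
    rw [extBetti_succ_adjoin_monomial (W := sparseUpperSet n b (p + 2) r)
        (V := sparseUpperSet n (b + 1) (p + 1) r) (single_one_ne_zero (⟨p, hp⟩ : Fin n))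
        (fun _ _ => UpperSet.mem_bot)
        (fun w _ => ⟨fun hw => add_mem_of_mem hw _,
          avoidsVar_sparseUpperSet (Or.inl p.lt_succ_self) w⟩)
        (fun u _ => mem_sparseUpperSet_succ_left hp (by omega)),
      ih (p := p + 1) (by omega),
      (hasBinomialBetti_leftSparseModule N b (p := p + 1) (by omega) hn i).2,
      choose_mul_choose_eq, ← Nat.cast_add, ← add_mul, ← Nat.choose_succ_succ]
    rfl

end SparseModule

/-- The Betti numbers of `I_{b,p+2,s} ⧸ I_{b+1,p+1,s+1}` for `s = p + 2b + c`. -/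
def twoSidedBetti (b c i : ℕ) : ℕ :=
  if i ≤ c then (b + c + 1).choose i * (b + c - i).choose b else if i = c + 1 then 1 else 0

theorem twoSidedBetti_of_le {b c i : ℕ} (hi : i ≤ c) :
    twoSidedBetti b c i = (b + c + 1).choose i * (b + c - i).choose b :=
  if_pos hi

theorem twoSidedBetti_top (b c : ℕ) : twoSidedBetti b c (c + 1) = 1 := by
  rw [twoSidedBetti, if_neg (by omega), if_pos rfl]

theorem twoSidedBetti_of_lt {b c i : ℕ} (hi : c + 1 < i) : twoSidedBetti b c i = 0 := by
  rw [twoSidedBetti, if_neg (by omega), if_neg (by omega)]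

theorem twoSidedBetti_zero_left (c i : ℕ) : twoSidedBetti 0 c i = (c + 1).choose i := by
  obtain hi | rfl | hi := lt_trichotomy i (c + 1)
  · rw [twoSidedBetti_of_le (by omega), Nat.choose_zero_right, mul_one, zero_add]
  · rw [twoSidedBetti_top, Nat.choose_self]
  · rw [twoSidedBetti_of_lt hi, Nat.choose_eq_zero_of_lt hi]

theorem choose_mul_choose_sub (a c j : ℕ) :
    (a + c).choose j * (a + c - j).choose a = c.choose j * (a + c).choose a := by
  have h := Nat.choose_mul (n := a + c) (Nat.le_add_left j a)
  rw [Nat.add_sub_cancel, Nat.choose_symm_add.symm, Nat.choose_mul (Nat.le_add_right a j),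
    Nat.add_sub_cancel_left, Nat.add_sub_cancel_left] at h
  rw [← h, mul_comm]

theorem twoSidedBetti_add_twoSidedBetti {b c i : ℕ} (hi : i + 1 ≤ c) :
    twoSidedBetti b c i + twoSidedBetti (b + 1) c (i + 1) =
      (c + 1).choose (i + 1) * (c + (b + 1)).choose (b + 1) := by
  have hsub : b + 1 + c - i = b + c - i + 1 := by omega
  have hsub' : b + 1 + c - (i + 1) = b + c - i := by omega
  have hi₀ := choose_mul_choose_sub (b + 1) c i
  have hi₁ := choose_mul_choose_sub (b + 1) c (i + 1)
  rw [hsub, Nat.choose_succ_succ] at hi₀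
  rw [hsub'] at hi₁
  rw [twoSidedBetti_of_le (by omega), twoSidedBetti_of_le hi, hsub', Nat.add_right_comm b c 1,
    Nat.choose_succ_succ (b + 1 + c), Nat.choose_succ_succ c, add_mul, add_mul, add_comm c (b + 1),
    ← hi₀, ← hi₁]
  ring

section TwoSidedBetti

variable {R : Type u} [CommRing R] {𝔪 : Ideal R} {A B C : Type u} [AddCommGroup A] [Module R A]
  [AddCommGroup B] [Module R B] [AddCommGroup C] [Module R C] {b c i : ℕ}

/-- The Betti numbers of `M` are those of `twoSidedBetti b c`, and the resolution of `M` is linear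
up to step `c`. -/
def HasTwoSidedBetti (𝔪 : Ideal R) (b c : ℕ) (M : Type u) [AddCommGroup M] [Module R M] : Prop :=
  ∀ i, (i ≤ c → IsLinearAt 𝔪 i M) ∧ extBetti 𝔪 i M = (twoSidedBetti b c i : ℕ)

theorem HasTwoSidedBetti.congr (h : HasTwoSidedBetti 𝔪 b c A) (e : A ≃ₗ[R] B) :
    HasTwoSidedBetti 𝔪 b c B :=
  fun i => ⟨fun hi => ((h i).1 hi).congr e, (extBetti_congr 𝔪 e).symm.trans (h i).2⟩

theorem HasBinomialBetti.hasTwoSidedBetti (h : HasBinomialBetti 𝔪 (c + 1) 1 A) :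
    HasTwoSidedBetti 𝔪 0 c A :=
  fun i => ⟨fun _ => (h i).1, by rw [(h i).2, mul_one, twoSidedBetti_zero_left]⟩

variable {A' : Type u} [AddCommGroup A'] [Module R A'] {f : A →ₗ[R] B} {g : B →ₗ[R] C}
  {f' : C →ₗ[R] B} {g' : B →ₗ[R] A'} {x : R}

theorem extPullback_eq_zero_of_comp_eq_smul (hx : x ∈ 𝔪) (hfg : f' ∘ₗ g = x • LinearMap.id)
    (hg : Function.Injective (extPullback 𝔪 i g)) : extPullback 𝔪 i f' = 0 :=
  LinearMap.ext fun e => hg <| by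
    rw [← LinearMap.comp_apply, ← extPullback_comp, hfg, extPullback_smul_eq_zero i hx,
      LinearMap.zero_apply, LinearMap.zero_apply, map_zero]

theorem IsShortExact.extPullback_eq_zero_of_isLinearAt (h : IsShortExact f g)
    (hf : Function.Surjective (f.lcomp R (R ⧸ 𝔪))) (hx : x ∈ 𝔪)
    (hfg : f' ∘ₗ g = x • LinearMap.id) (hA : ∀ j ≤ c, IsLinearAt 𝔪 j A) (hi : i ≤ c + 1) :
    extPullback 𝔪 i f' = 0 := by
  refine extPullback_eq_zero_of_comp_eq_smul hx hfg ?_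
  cases i with
  | zero => exact h.extPullback_zero_injective 𝔪
  | succ i =>
    exact h.extPullback_succ_injective ((hA i (Nat.le_of_lt_succ hi)).extPullback_surjective hf)

theorem extBetti_eq_zero_of_isShortExact (h : IsShortExact f g) (hA : extBetti 𝔪 i A = 0)
    (hC : extBetti 𝔪 i C = 0) : extBetti 𝔪 i B = 0 := by
  rw [extBetti, Module.length_eq_zero_iff] at hA hC ⊢
  refine subsingleton_of_forall_eq 0 fun e => ?_
  obtain ⟨e, rfl⟩ := (h.exact_extPullback 𝔪 i e).mp (Subsingleton.elim _ _)
  rw [Subsingleton.elim e 0, map_zero]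

theorem extBetti_eq_of_comp_eq_smul (h : IsShortExact f g) (h' : IsShortExact f' g') (hx : x ∈ 𝔪)
    (hfg : f' ∘ₗ g = x • LinearMap.id) (hA' : extBetti 𝔪 (i + 1) A' = 0)
    (hC : extBetti 𝔪 (i + 1) C = 0) : extBetti 𝔪 i B = extBetti 𝔪 i A := by
  rw [extBetti, Module.length_eq_zero_iff] at hA' hC
  have hg (e : ResidueExt 𝔪 i C) : extPullback 𝔪 i g e = 0 := by
    obtain ⟨e, rfl⟩ := (h'.exact_extPullback_connecting 𝔪 i e).mp (Subsingleton.elim _ _)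
    rw [← LinearMap.comp_apply, ← extPullback_comp, hfg, extPullback_smul_eq_zero i hx,
      LinearMap.zero_apply]
  refine (LinearEquiv.ofBijective (extPullback 𝔪 i f)
    ⟨(injective_iff_map_eq_zero _).mpr fun e he => ?_, fun e => ?_⟩).length_eq
  · obtain ⟨e, rfl⟩ := (h.exact_extPullback 𝔪 i e).mp he
    exact hg e
  · exact (h.exact_extPullback_connecting 𝔪 i e).mp (Subsingleton.elim _ _)

/-- Linearity of `A` up to step `c` makes `f'` vanish on `Ext` up to step `c + 1`, because
`f' ∘ g` is multiplication by an element of `𝔪`; beyond that, `A'` and `C` contribute nothing. -/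
theorem HasTwoSidedBetti.of_isShortExact (h : IsShortExact f g) (h' : IsShortExact f' g')
    (hf : Function.Surjective (f.lcomp R (R ⧸ 𝔪))) (hx : x ∈ 𝔪)
    (hfg : f' ∘ₗ g = x • LinearMap.id) (hA : ∀ i ≤ c, IsLinearAt 𝔪 i A)
    (hAtop : extBetti 𝔪 (c + 2) A = 1) (hC : HasTwoSidedBetti 𝔪 b (c + 1) C)
    (hA' : HasBinomialBetti 𝔪 (c + 2) ((c + 1 + (b + 1)).choose (b + 1)) A') :
    HasTwoSidedBetti 𝔪 (b + 1) (c + 1) B := by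
  have hf' {i : ℕ} (hi : i ≤ c + 1) : extPullback 𝔪 i f' = 0 :=
    h.extPullback_eq_zero_of_isLinearAt hf hx hfg hA hi
  have hA'top {i : ℕ} (hi : c + 2 < i) : extBetti 𝔪 i A' = 0 := by
    rw [(hA' i).2, Nat.choose_eq_zero_of_lt hi, zero_mul, Nat.cast_zero]
  have hCtop {i : ℕ} (hi : c + 2 < i) : extBetti 𝔪 i C = 0 := by
    rw [(hC i).2, twoSidedBetti_of_lt hi, Nat.cast_zero]
  refine fun i => ⟨fun hi =>
    (hA' i).1.of_surjective (h'.extPullback_surjective_of_eq_zero (hf' hi)), ?_⟩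
  obtain hi | rfl | hi := lt_trichotomy i (c + 2)
  · cases i with
    | zero =>
      rw [← h'.extBetti_zero_of_extPullback_eq_zero (hf' (Nat.zero_le _)), (hA' 0).2,
        twoSidedBetti_of_le (Nat.zero_le _), Nat.choose_zero_right, Nat.choose_zero_right,
        Nat.sub_zero, add_comm (c + 1)]
    | succ i =>
      have hadd := h'.extBetti_succ_of_extPullback_eq_zero (hf' (by omega : i ≤ c + 1))
        (hf' (by omega))
      rw [(hA' _).2, (hC i).2, ← twoSidedBetti_add_twoSidedBetti (by omega), Nat.cast_add] at hadd
      exact (ENat.add_right_injective_of_ne_top (ENat.natCast_ne_top _) hadd).symm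
  · rw [extBetti_eq_of_comp_eq_smul h h' hx hfg (hA'top (by omega)) (hCtop (by omega)), hAtop,
      twoSidedBetti_top, Nat.cast_one]
  · rw [extBetti_eq_zero_of_isShortExact h' (hCtop hi) (hA'top hi), twoSidedBetti_of_lt hi,
      Nat.cast_zero]

end TwoSidedBetti

section RightEnd

variable {n : ℕ} {u : Fin n →₀ ℕ} {a p r : ℕ}

theorem mem_sparseUpperSet_succ_right_of_mem (hpr : p ≤ r + 1) (hr : r + 1 < n)
    (hu : u ∈ sparseUpperSet n a p r) : u ∈ sparseUpperSet n (a + 1) p (r + 2) ↔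
      u ∈ sparseUpperSet n (a + 1) p (r + 1) ∨ u ⟨r + 1, hr⟩ ≠ 0 :=
  (hasSparseSubset_succ_right hpr).trans <| or_congr_right <|
    (and_iff_left hu).trans (val_mem_varSupport (j := ⟨r + 1, hr⟩))

theorem mem_sparseUpperSet_succ_right (hpr : p ≤ r + 1) (hr : r + 1 < n) :
    u ∈ sparseUpperSet n (a + 1) p (r + 2) ↔ u ∈ sparseUpperSet n (a + 1) p (r + 1) ∨
      ∃ w ∈ sparseUpperSet n a p r, u = w + single ⟨r + 1, hr⟩ 1 := by
  refine (hasSparseSubset_succ_right hpr).trans (or_congr_right ⟨fun ⟨hru, hu⟩ => ?_, ?_⟩)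
  · exact (avoidsVar_sparseUpperSet (Or.inr (Nat.le_succ r))).exists_eq_add_single
      hu (val_mem_varSupport (j := ⟨r + 1, hr⟩).mp hru)
  · rintro ⟨w, hw, rfl⟩
    exact ⟨by rw [varSupport_add, varSupport_single]; exact Or.inr rfl, add_mem_of_mem hw _⟩

theorem add_single_mem_sparseUpperSet_succ_right (hpr : p ≤ r + 1) (hr : r + 1 < n)
    (hu : u ∈ sparseUpperSet n a p r) :
    u + single ⟨r + 1, hr⟩ 1 ∈ sparseUpperSet n (a + 1) p (r + 2) :=
  (mem_sparseUpperSet_succ_right hpr hr).mpr (Or.inr ⟨u, hu, rfl⟩)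

/-- The exponents of `I_{b+1,p+2,t+1} + I_{b+2,p+1,t+3}`. -/
def spliceUpperSet (n b p t : ℕ) : UpperSet (Fin n →₀ ℕ) :=
  sparseUpperSet n (b + 1) (p + 1) (t + 1) ⊓ sparseUpperSet n (b + 2) p (t + 3)

variable {b t : ℕ}

theorem mem_spliceUpperSet : u ∈ spliceUpperSet n b p t ↔
    u ∈ sparseUpperSet n (b + 1) (p + 1) (t + 1) ∨ u ∈ sparseUpperSet n (b + 2) p (t + 3) :=
  UpperSet.mem_inf_iff

theorem mem_spliceUpperSet_add_single_succ (ht : p + 2 * b + 1 ≤ t) (hn : t + 1 < n)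
    (hu : u ∈ sparseUpperSet n b (p + 1) t) : u ∈ sparseUpperSet n (b + 1) p (t + 1) ↔
      u + single ⟨t + 1, hn⟩ 1 ∈ spliceUpperSet n b p t := by
  rw [mem_spliceUpperSet]
  constructor
  · intro hu'
    refine (HasSparseSubset.splice hu' hu ht).imp (fun h => add_mem_of_mem h _) fun h => ?_
    exact HasSparseSubset.mono_interval
      (add_single_mem_sparseUpperSet_succ_right (by omega) hn h) le_rfl (Nat.le_succ _)
  · have havoid : AvoidsVar (sparseUpperSet n (b + 1) p (t + 1)) ⟨t + 1, hn⟩ :=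
      avoidsVar_sparseUpperSet (Or.inr le_rfl)
    rintro (h | h)
    · exact havoid u (HasSparseSubset.mono_interval h (Nat.le_succ _) le_rfl)
    · exact havoid u (HasSparseSubset.drop_right h)

theorem mem_spliceUpperSet_iff_add_single (ht : p + 2 * b + 1 ≤ t) (hn : t + 2 < n)
    (hu : u ∈ sparseUpperSet n (b + 1) (p + 1) (t + 2)) : u ∈ spliceUpperSet n b p t ↔
      u + single ⟨t + 2, hn⟩ 1 ∈ sparseUpperSet n (b + 2) p (t + 3) := by
  rw [mem_spliceUpperSet]
  constructor
  · rintro (h | h)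
    · exact add_single_mem_sparseUpperSet_succ_right (by omega) hn
        (HasSparseSubset.mono_interval h (Nat.le_succ _) le_rfl)
    · exact add_mem_of_mem h _
  · intro h
    have hJ (h : u ∈ sparseUpperSet n (b + 2) p (t + 2)) :
        u ∈ sparseUpperSet n (b + 2) p (t + 3) :=
      HasSparseSubset.mono_interval h le_rfl (Nat.le_succ _)
    obtain h | ⟨-, h⟩ := (hasSparseSubset_succ_right (by omega)).mp h
    · exact Or.inr (hJ (avoidsVar_sparseUpperSet (j := ⟨t + 2, hn⟩) (Or.inr le_rfl) u h))
    · have h : u ∈ sparseUpperSet n (b + 1) p (t + 1) :=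
        avoidsVar_sparseUpperSet (j := ⟨t + 2, hn⟩) (Or.inr (Nat.le_succ _)) u h
      obtain hu | ⟨htu, hu⟩ := (hasSparseSubset_succ_right (by omega)).mp hu
      · exact Or.inl hu
      · refine (HasSparseSubset.splice h hu ht).imp id fun h => hJ ?_
        exact (hasSparseSubset_succ_right (by omega)).mpr (Or.inr ⟨htu, h⟩)

theorem exists_mem_sparseUpperSet_iff_le (hr : r + 1 = p + 2 * a) (hn : r ≤ n) :
    ∃ e : Fin n →₀ ℕ, varSupport e = {t | ∃ j < a, p + 2 * j = t} ∧
      ∀ u, u ∈ sparseUpperSet n a p r ↔ e ≤ u := by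
  classical
  let e : Fin n →₀ ℕ := Finsupp.equivFunOnFinite.symm fun i =>
    if ∃ j < a, p + 2 * j = i then 1 else 0
  have he (i : Fin n) : e i = if ∃ j < a, p + 2 * j = i then 1 else 0 := rfl
  refine ⟨e, ?_, fun u => (hasSparseSubset_iff_of_tight hr).trans ⟨fun h i => ?_, ?_⟩⟩
  · ext t
    constructor
    · rintro ⟨htn, ht⟩
      by_contra hcon
      exact ht ((he _).trans (if_neg hcon))
    · rintro ⟨j, hj, rfl⟩
      exact ⟨by omega, by rw [he, if_pos ⟨j, hj, rfl⟩]; exact one_ne_zero⟩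
  · rw [he]
    split_ifs with hi
    · obtain ⟨j, hj, hji⟩ := hi
      exact Nat.one_le_iff_ne_zero.mpr (val_mem_varSupport.mp (hji ▸ h j hj))
    · exact Nat.zero_le _
  · intro heu j hj
    have hjn : p + 2 * j < n := by omega
    refine ⟨hjn, Nat.one_le_iff_ne_zero.mp ?_⟩
    exact (if_pos ⟨j, hj, rfl⟩ : e ⟨p + 2 * j, hjn⟩ = 1).ge.trans (heu _)

end RightEnd

section TwoSided

variable {n b p c : ℕ} {k : Type}

/-- The module `I_{b,[p+1,s)} ⧸ I_{b+1,[p,s+1)}`, with the intervals as in `sparseUpperSet`. -/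
abbrev TwoSidedSparseModule (k : Type) [CommRing k] (n b p s : ℕ) : Type :=
  MonomialModule k (sparseUpperSet n b (p + 1) s) (sparseUpperSet n (b + 1) p (s + 1))

theorem hasTwoSidedBetti_zero_left [Field k] {s : ℕ} (hs : s = p + c) (hn : s + 1 ≤ n) :
    HasTwoSidedBetti (idealOfVars (Fin n) k) 0 c (TwoSidedSparseModule k n 0 p s) := by
  have h : HasBinomialBetti (idealOfVars (Fin n) k) (c + 1) _ (TwoSidedSparseModule k n 0 p s) :=
    hasBinomialBetti_leftSparseModule (c + 1) 0 (by omega) hn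
  rw [Nat.choose_zero_right] at h
  exact h.hasTwoSidedBetti

theorem hasTwoSidedBetti_zero_right [Field k] {s : ℕ} (hs : s = p + 2 * b) (hn : s + 1 ≤ n) :
    HasTwoSidedBetti (idealOfVars (Fin n) k) b 0 (TwoSidedSparseModule k n b p s) := by
  obtain ⟨e, he, hle⟩ := exists_mem_sparseUpperSet_iff_le (n := n) (a := b) (p := p + 1) (r := s)
    (by omega) (by omega)
  have hr : s + 1 + 1 = p + 2 * (b + 1) := by omega
  have hiff (u : Fin n →₀ ℕ) : u ∈ sparseUpperSet n (b + 1) p (s + 1) ↔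
      u + e ∈ sparseUpperSet n (b + 1) p (s + 1) := by
    rw [mem_sparseUpperSet, mem_sparseUpperSet, hasSparseSubset_iff_of_tight hr,
      hasSparseSubset_iff_of_tight hr, varSupport_add, he]
    refine forall₂_congr fun j _ => (or_iff_left ?_).symm
    rintro ⟨i, -, hi⟩
    omega
  have hequiv : MonomialModule k ⊥ (sparseUpperSet n (b + 1) p (s + 1)) ≃ₗ[MvPolynomial (Fin n) k]
      TwoSidedSparseModule k n b p s :=
    mulMonomialEquiv (e := e) (fun w _ => (hle _).mpr le_add_self) (fun w _ => hiff w) fun u hu =>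
      Or.inr ⟨u - e, UpperSet.mem_bot, (tsub_add_cancel_of_le ((hle u).mp hu)).symm⟩
  refine fun i => ⟨fun hi => Nat.le_zero.mp hi ▸ isLinearAt_zero, ?_⟩
  rw [← extBetti_congr _ hequiv]
  obtain _ | _ | i := i
  · rw [extBetti_zero_quotient_sparse 1 b (by omega) hn, twoSidedBetti_of_le le_rfl,
      Nat.choose_zero_right, one_mul, add_zero, Nat.sub_zero, Nat.choose_self, Nat.cast_one]
  · rw [extBetti_succ_quotient_sparse 1 b 0 (by omega) hn, twoSidedBetti_top, add_zero,
      Nat.choose_self, Nat.choose_self]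
  · rw [extBetti_succ_quotient_sparse 1 b _ (by omega) hn, twoSidedBetti_of_lt (by omega),
      Nat.choose_eq_zero_of_lt (by omega), zero_mul]

end TwoSided

section AdjoinVar

variable {σ k : Type u} [Field k] {U V V' : UpperSet (σ →₀ ℕ)} {j : σ} {b c : ℕ}

theorem HasTwoSidedBetti.isLinearAt_adjoin_var (hU : AvoidsVar U j) (hV : AvoidsVar V j)
    (hV' : ∀ u ∈ U, (u ∈ V' ↔ u ∈ V ∨ u j ≠ 0))
    (h : HasTwoSidedBetti (idealOfVars σ k) b c (MonomialModule k U V)) {i : ℕ} (hi : i ≤ c) :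
    IsLinearAt (idealOfVars σ k) i (MonomialModule k U V') := by
  cases i with
  | zero => exact isLinearAt_zero
  | succ i => exact ((h i).1 (by omega)).adjoin_var hU hV hV' ((h (i + 1)).1 hi)

theorem HasTwoSidedBetti.extBetti_top_adjoin_var (hU : AvoidsVar U j) (hV : AvoidsVar V j)
    (hV' : ∀ u ∈ U, (u ∈ V' ↔ u ∈ V ∨ u j ≠ 0))
    (h : HasTwoSidedBetti (idealOfVars σ k) b c (MonomialModule k U V)) :
    extBetti (idealOfVars σ k) (c + 2) (MonomialModule k U V') = 1 := by
  rw [extBetti_succ_adjoin_var hU hV hV', (h _).2, (h _).2, twoSidedBetti_top,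
    twoSidedBetti_of_lt (by omega), Nat.cast_one, Nat.cast_zero, add_zero]

end AdjoinVar

section TwoSidedSparse

variable {n b p t c : ℕ} {k : Type} [Field k]

theorem HasTwoSidedBetti.splice (ht : p + 2 * b + 1 ≤ t) (hn : t + 1 < n)
    (h : HasTwoSidedBetti (idealOfVars (Fin n) k) b c (TwoSidedSparseModule k n b p t)) :
    HasTwoSidedBetti (idealOfVars (Fin n) k) b c
      (MonomialModule k (sparseUpperSet n (b + 1) (p + 1) (t + 2)) (spliceUpperSet n b p t)) :=
  h.congr <| mulMonomialEquiv (e := single ⟨t + 1, hn⟩ 1)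
    (fun _ hw => add_single_mem_sparseUpperSet_succ_right (by omega) hn hw)
    (fun _ hw => mem_spliceUpperSet_add_single_succ ht hn hw)
    fun _ hu => ((mem_sparseUpperSet_succ_right (by omega) hn).mp hu).imp_left
      fun hu => mem_spliceUpperSet.mpr (Or.inl hu)

theorem isShortExact_to_splice (n b p t : ℕ) : IsShortExact
    (mulMonomial (k := k) 0 (W := sparseUpperSet n (b + 1) (p + 1) (t + 1))
      (U := sparseUpperSet n (b + 1) (p + 1) (t + 2)) (V₁ := sparseUpperSet n (b + 2) p (t + 3))
      (fun _ hw => add_mem_of_mem (HasSparseSubset.mono_interval hw le_rfl (Nat.le_succ _)) 0)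
      fun _ _ => by rw [add_zero])
    (monomialProj (V' := spliceUpperSet n b p t)
      fun _ _ hu => mem_spliceUpperSet.mpr (Or.inr hu)) :=
  isShortExact_mulMonomial _ _ fun _ _ => by
    simp only [mem_spliceUpperSet, add_zero, exists_eq_right', or_comm]

theorem mem_ici_single {σ : Type*} {u : σ →₀ ℕ} {j : σ} :
    u ∈ UpperSet.Ici (single j 1) ↔ u j ≠ 0 :=
  UpperSet.mem_Ici_iff.trans (Finsupp.single_le_iff.trans Nat.one_le_iff_ne_zero)

theorem mem_inf_ici_single_iff (hpt : p ≤ t + 2) (hn : t + 2 < n) {u : Fin n →₀ ℕ}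
    (hu : u ∈ sparseUpperSet n (b + 1) (p + 1) (t + 2)) :
    u ∈ sparseUpperSet n (b + 2) p (t + 2) ⊓ UpperSet.Ici (single ⟨t + 2, hn⟩ 1) ↔
      u ∈ sparseUpperSet n (b + 2) p (t + 3) ∨
        ∃ w ∈ sparseUpperSet n (b + 1) (p + 1) (t + 2), u = w + single ⟨t + 2, hn⟩ 1 := by
  rw [UpperSet.mem_inf_iff, mem_ici_single]
  constructor
  · refine Or.imp (fun h => HasSparseSubset.mono_interval h le_rfl (Nat.le_succ _)) fun h => ?_
    exact (avoidsVar_sparseUpperSet (Or.inr le_rfl)).exists_eq_add_single hu h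
  · rintro (h | ⟨w, -, rfl⟩)
    · exact ((hasSparseSubset_succ_right hpt).mp h).imp_right fun h =>
        val_mem_varSupport (j := ⟨t + 2, hn⟩).mp h.1
    · exact Or.inr (mem_ici_single.mp (UpperSet.mem_Ici_iff.mpr le_add_self))

theorem HasTwoSidedBetti.twoSidedSparseModule_succ (ht : t = p + 2 * b + c + 1) (hn : t + 2 < n)
    (hA : HasTwoSidedBetti (idealOfVars (Fin n) k) (b + 1) c
      (TwoSidedSparseModule k n (b + 1) p (t + 1)))
    (hC : HasTwoSidedBetti (idealOfVars (Fin n) k) b (c + 1) (TwoSidedSparseModule k n b p t)) :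
    HasTwoSidedBetti (idealOfVars (Fin n) k) (b + 1) (c + 1)
      (TwoSidedSparseModule k n (b + 1) p (t + 2)) := by
  have hU : AvoidsVar (sparseUpperSet n (b + 1) (p + 1) (t + 1)) ⟨t + 2, hn⟩ :=
    avoidsVar_sparseUpperSet (Or.inr (Nat.le_succ _))
  have hV : AvoidsVar (sparseUpperSet n (b + 2) p (t + 2)) ⟨t + 2, hn⟩ :=
    avoidsVar_sparseUpperSet (Or.inr le_rfl)
  have hV' (u) (hu : u ∈ sparseUpperSet n (b + 1) (p + 1) (t + 1)) :
      u ∈ sparseUpperSet n (b + 2) p (t + 3) ↔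
        u ∈ sparseUpperSet n (b + 2) p (t + 2) ∨ u ⟨t + 2, hn⟩ ≠ 0 :=
    mem_sparseUpperSet_succ_right_of_mem (by omega) hn
      (HasSparseSubset.mono_interval hu (Nat.le_succ _) le_rfl)
  refine .of_isShortExact (isShortExact_to_splice n b p t)
    (isShortExact_mulMonomial (fun _ hw => add_mem_of_mem hw _)
      (fun _ hu => mem_spliceUpperSet_iff_add_single (by omega) hn hu)
      fun _ hu => mem_inf_ici_single_iff (by omega) hn hu) ?_
    (monomial_mem_idealOfVars (single_one_ne_zero _))
    (mulMonomial_comp_monomialProj _ _ _)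
    (fun _ hi => hA.isLinearAt_adjoin_var hU hV hV' hi)
    (hA.extBetti_top_adjoin_var hU hV hV') (hC.splice (by omega) (by omega)) ?_
  · refine lcomp_mulMonomial_surjective _ _ isGeneratedInDegree_sparseUpperSet fun u hu => ?_
    rw [map_zero, add_zero]
    exact isGeneratedInDegree_sparseUpperSet.le_degree hu
  · exact HasBinomialBetti.adjoin_var (avoidsVar_sparseUpperSet (Or.inr le_rfl)) hV
      (fun u _ => UpperSet.mem_inf_iff.trans (or_congr_right mem_ici_single))
      (hasBinomialBetti_leftSparseModule (c + 1) (b + 1) (r := t + 2) (by omega) (by omega))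

theorem hasTwoSidedBetti_twoSidedSparseModule (c b : ℕ) {s : ℕ} (hs : s = p + 2 * b + c)
    (hn : s + 1 ≤ n) :
    HasTwoSidedBetti (idealOfVars (Fin n) k) b c (TwoSidedSparseModule k n b p s) := by
  induction c generalizing b s with
  | zero => exact hasTwoSidedBetti_zero_right hs hn
  | succ c ihc =>
    induction b generalizing s with
    | zero => exact hasTwoSidedBetti_zero_left (by omega) hn
    | succ b ihb =>
      obtain ⟨t, rfl⟩ : ∃ t, s = t + 2 := ⟨s - 2, by omega⟩
      exact .twoSidedSparseModule_succ (by omega) hn (ihc (b + 1) (by omega) (by omega))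
        (ihb (by omega) (by omega))

end TwoSidedSparse

/-! ### The cyclic polytope -/

section AdjoinMonomial

variable {σ k : Type u} [CommRing k]

/-- The exponents of the monomial ideal `I_V + x^e I_W`. -/
def adjoinMonomial (V W : UpperSet (σ →₀ ℕ)) (e : σ →₀ ℕ) : UpperSet (σ →₀ ℕ) where
  carrier := {u | u ∈ V ∨ ∃ w ∈ W, u = w + e}
  upper' := by
    rintro _ v huv (hu | ⟨w, hw, rfl⟩)
    · exact Or.inl (V.upper huv hu)
    · obtain ⟨v, rfl⟩ := exists_add_of_le huv
      exact Or.inr ⟨w + v, add_mem_of_mem hw v, add_right_comm _ _ _⟩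

theorem monomialIdeal_adjoinMonomial (V W : UpperSet (σ →₀ ℕ)) (e : σ →₀ ℕ) :
    monomialIdeal k (adjoinMonomial V W e) =
      monomialIdeal k V + Ideal.span {monomial e 1} * monomialIdeal k W := by
  refine le_antisymm (monomialIdeal_le ?_) (sup_le ?_ ?_)
  · rintro _ (hu | ⟨w, hw, rfl⟩)
    · exact Ideal.mem_sup_left (monomial_mem_monomialIdeal hu 1)
    · refine Ideal.mem_sup_right (Ideal.mem_span_singleton_mul.mpr
        ⟨_, monomial_mem_monomialIdeal hw 1, ?_⟩)
      rw [monomial_mul, one_mul, add_comm]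
  · exact monomialIdeal_le fun u hu => monomial_mem_monomialIdeal (Or.inl hu) 1
  · exact (Ideal.span_singleton_mul_le_iff).mpr fun p hp =>
      monomial_mul_mem_monomialIdeal.mpr fun w hw => Or.inr ⟨w, mem_monomialIdeal.mp hp w hw, rfl⟩

end AdjoinMonomial

section IdealI

variable {k : Type} [Field k] {n a p r : ℕ} {t : ℕ → ℕ}

theorem Xv_succ {t : ℕ} (ht : t < n) : Xv k n (t + 1) = monomial (single ⟨t, ht⟩ 1) 1 :=
  dif_pos ⟨Nat.le_add_left 1 t, ht⟩

theorem Xv_mul_mem_monomialIdeal {t : ℕ} (hr : r ≤ n) (hpt : p < t) (htr : t ≤ r)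
    {f : MvPolynomial (Fin n) k} (hf : f ∈ monomialIdeal k (sparseUpperSet n a (t + 1) r)) :
    Xv k n t * f ∈ monomialIdeal k (sparseUpperSet n (a + 1) p r) := by
  obtain ⟨t, rfl⟩ := Nat.exists_eq_add_one_of_ne_zero (Nat.ne_zero_of_lt hpt)
  rw [Xv_succ (by omega)]
  exact monomial_mul_mem_monomialIdeal.mpr fun w hw => mem_sparseUpperSet_succ.mpr
    ⟨⟨t, by omega⟩, Nat.le_of_lt_succ hpt, htr, w, mem_monomialIdeal.mp hf w hw, rfl⟩

theorem prod_Xv_mem_monomialIdeal (hr : r ≤ n) (hp : p < t 0) (hta : t a ≤ r)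
    (hgap : ∀ j < a, t j + 2 ≤ t (j + 1)) : t 0 ≤ r ∧ ∏ j ∈ Finset.range (a + 1), Xv k n (t j) ∈
      monomialIdeal k (sparseUpperSet n (a + 1) p r) := by
  induction a generalizing p t with
  | zero =>
    refine ⟨hta, ?_⟩
    rw [zero_add, Finset.prod_range_one, ← mul_one (Xv k n (t 0))]
    exact Xv_mul_mem_monomialIdeal hr hp hta (mem_monomialIdeal.mpr fun _ _ => UpperSet.mem_bot)
  | succ a ih =>
    have hgap₀ := hgap 0 a.succ_pos
    obtain ⟨ht, hmem⟩ := ih (p := t 0 + 1) (t := fun j => t (j + 1)) hgap₀ hta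
      fun j hj => hgap (j + 1) (by omega)
    rw [Finset.prod_range_succ', mul_comm]
    exact ⟨by omega, Xv_mul_mem_monomialIdeal hr hp (by omega) hmem⟩

theorem exists_monomial_eq_mul_prod_Xv {u : Fin n →₀ ℕ}
    (hu : u ∈ sparseUpperSet n a p r) : ∃ t : ℕ → ℕ, p < t 0 ∧ (∀ j < a, t j ≤ r) ∧
      (∀ j, j + 1 < a → t j + 2 ≤ t (j + 1)) ∧
      ∃ w, monomial u (1 : k) = monomial w 1 * ∏ j ∈ Finset.range a, Xv k n (t j) := by
  induction a generalizing p u with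
  | zero =>
    refine ⟨fun _ => p + 1, p.lt_succ_self, fun j hj => absurd hj j.not_lt_zero,
      fun j hj => absurd hj (Nat.not_lt_zero _), u, ?_⟩
    rw [Finset.prod_range_zero, mul_one]
  | succ a ih =>
    obtain ⟨i, hpi, hir, w, hw, rfl⟩ := mem_sparseUpperSet_succ.mp hu
    obtain ⟨t, ht, htr, hgap, v, hv⟩ := ih hw
    refine ⟨fun j => j.casesOn (i + 1) t, Nat.lt_succ_of_le hpi, ?_, ?_, v, ?_⟩
    · rintro (_ | j) hj
      · exact hir
      · exact htr j (Nat.lt_of_succ_lt_succ hj)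
    · rintro (_ | j) hj
      · exact ht
      · exact hgap j (Nat.lt_of_succ_lt_succ hj)
    · rw [Finset.prod_range_succ', ← mul_assoc, ← hv]
      change _ = monomial w 1 * Xv k n (i + 1)
      rw [Xv_succ i.2, monomial_mul, one_mul]

theorem idealI_eq_monomialIdeal (hr : r ≤ n) :
    idealI k n (a + 1) (p + 1) r = monomialIdeal k (sparseUpperSet n (a + 1) p r) := by
  refine le_antisymm (Ideal.span_le.mpr ?_) (monomialIdeal_le fun u hu => ?_)
  · rintro _ ⟨t, hp, hta, hgap, rfl⟩
    exact (prod_Xv_mem_monomialIdeal hr hp hta fun j hj => hgap j (Nat.succ_lt_succ hj)).2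
  · obtain ⟨t, hp, htr, hgap, w, hw⟩ := exists_monomial_eq_mul_prod_Xv (k := k) hu
    exact hw ▸ Ideal.mul_mem_left _ _
      (Ideal.subset_span ⟨t, hp, htr a a.lt_succ_self, hgap, rfl⟩)

end IdealI

section CyclicIdeal

variable {k : Type} [Field k]

/-- The exponents of `I_{b+1,2,s+1} + x_1 x_{s+2} I_{b,3,s}`, the Stanley–Reisner ideal of
`Δ(2b + 1, s + 2)`. -/
noncomputable def cyclicUpperSet (b s : ℕ) : UpperSet (Fin (s + 2) →₀ ℕ) :=
  adjoinMonomial (sparseUpperSet (s + 2) (b + 1) 1 (s + 1)) (sparseUpperSet (s + 2) b 2 s)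
    (single 0 1 + single (Fin.last (s + 1)) 1)

theorem idealI_add_eq_monomialIdeal (b s : ℕ) : idealI k (s + 2) (b + 2) 2 (s + 1) +
    Ideal.span {Xv k (s + 2) 1 * Xv k (s + 2) (s + 2)} * idealI k (s + 2) (b + 1) 3 s =
      monomialIdeal k (cyclicUpperSet (b + 1) s) := by
  rw [idealI_eq_monomialIdeal (Nat.le_succ _), idealI_eq_monomialIdeal (Nat.le_add_right s 2),
    Xv_succ (t := 0) (by omega), Xv_succ (t := s + 1) (by omega), monomial_mul, one_mul,
    cyclicUpperSet, monomialIdeal_adjoinMonomial]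
  rfl

theorem single_one_add_ne_zero {σ : Type*} (j : σ) (u : σ →₀ ℕ) : single j 1 + u ≠ 0 :=
  fun h => single_one_ne_zero j (add_eq_zero.mp h).1

theorem mem_sparseUpperSet_iff_add_ends {b s : ℕ} (u : Fin (s + 2) →₀ ℕ) :
    u ∈ sparseUpperSet (s + 2) (b + 1) 1 (s + 1) ↔
      u + (single 0 1 + single (Fin.last (s + 1)) 1) ∈
        sparseUpperSet (s + 2) (b + 1) 1 (s + 1) := by
  refine ⟨fun hu => add_mem_of_mem hu _, fun hu => ?_⟩
  rw [← add_assoc] at hu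
  exact avoidsVar_sparseUpperSet (Or.inl one_pos) _ (avoidsVar_sparseUpperSet (Or.inr le_rfl) _ hu)

variable {b c s : ℕ}

theorem extBetti_zero_cyclic (hs : s = 2 * b + c + 1) : extBetti (idealOfVars (Fin (s + 2)) k) 0
    (MvPolynomial (Fin (s + 2)) k ⧸ monomialIdeal k (cyclicUpperSet b s)) = 1 := by
  rw [extBetti_congr _ (quotientEquivMonomialModule k _),
    extBetti_zero_adjoin_monomial (single_one_add_ne_zero _ _) (fun _ _ => UpperSet.mem_bot)
      (fun u _ => mem_sparseUpperSet_iff_add_ends u) fun _ _ => Iff.rfl,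
    extBetti_zero_quotient_sparse (c + 1) b (by omega) (Nat.le_succ _)]

theorem extBetti_succ_cyclic (hs : s = 2 * b + c + 1) (i : ℕ) :
    extBetti (idealOfVars (Fin (s + 2)) k) (i + 1)
      (MvPolynomial (Fin (s + 2)) k ⧸ monomialIdeal k (cyclicUpperSet b s)) =
      (twoSidedBetti b c i + (b + c + 1).choose (b + i + 1) * (b + i).choose b : ℕ) := by
  rw [extBetti_congr _ (quotientEquivMonomialModule k _),
    extBetti_succ_adjoin_monomial (single_one_add_ne_zero _ _) (fun _ _ => UpperSet.mem_bot)
      (fun u _ => mem_sparseUpperSet_iff_add_ends u) fun _ _ => Iff.rfl,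
    (hasTwoSidedBetti_twoSidedSparseModule c b (by omega) (Nat.le_succ _) i).2,
    extBetti_succ_quotient_sparse (c + 1) b i (by omega) (Nat.le_succ _), Nat.cast_add]
  rfl

end CyclicIdeal

section BettiRank

theorem length_eq_of_isTorsionBySet {k R V : Type*} [CommRing k] [CommRing R] [Algebra k R]
    {I : Ideal R} [AddCommGroup V] [Module k V] [Module R V] [IsScalarTower k R V]
    (hI : Function.Surjective (algebraMap k (R ⧸ I))) (hV : Module.IsTorsionBySet R V I) :
    Module.length k V = Module.length R V := by
  let _ : Module (R ⧸ I) V := hV.module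
  have : IsScalarTower k (R ⧸ I) V := hV.isScalarTower
  rw [Module.length_eq_of_surjective hI,
    ← Module.length_eq_of_surjective (S := R) (M := V) Ideal.Quotient.mk_surjective]

theorem algebraMap_quotient_idealOfVars_surjective (σ k : Type*) [CommRing k] :
    Function.Surjective (algebraMap k (MvPolynomial σ k ⧸ idealOfVars σ k)) := fun x => by
  obtain ⟨p, rfl⟩ := Ideal.Quotient.mk_surjective x
  refine ⟨constantCoeff p, Ideal.Quotient.eq.mpr ?_⟩
  rw [idealOfVars_eq_ker_constantCoeff, RingHom.sub_mem_ker_iff]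
  exact constantCoeff_C _ _

theorem rank_restrictScalars (k R V : Type*) [CommRing k] [CommRing R] [Algebra k R]
    [AddCommGroup V] [Module k V] [Module R V] [IsScalarTower k R V] :
    Module.rank k (RestrictScalars k R V) = Module.rank k V :=
  LinearEquiv.rank_eq
    { RestrictScalars.addEquiv k R V with
      map_smul' := fun c x => algebraMap_smul R c (RestrictScalars.addEquiv k R V x) }

variable {k : Type} [Field k] {n : ℕ}

theorem betti_eq_of_extBetti_eq {M : Type} [AddCommGroup M] [Module (MvPolynomial (Fin n) k) M]
    {i r : ℕ} (h : extBetti (idealOfVars (Fin n) k) i M = r) :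
    betti k n (ModuleCat.of _ M) i = r := by
  let _ : Module k (ResidueTor (idealOfVars (Fin n) k) i M) :=
    Module.compHom _ (algebraMap k (MvPolynomial (Fin n) k))
  have : IsScalarTower k (MvPolynomial (Fin n) k) (ResidueTor (idealOfVars (Fin n) k) i M) :=
    .of_compHom _ _ _
  refine (rank_restrictScalars k (MvPolynomial (Fin n) k)
    (ResidueTor (idealOfVars (Fin n) k) i M)).trans (Cardinal.toENat_eq_natCast.mp ?_)
  rw [← h, ← length_residueTor, ← Module.length_eq_rank]
  exact length_eq_of_isTorsionBySet (algebraMap_quotient_idealOfVars_surjective _ k)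
    (isTorsionBySet_residueTor i)

end BettiRank

section Eta

variable {b c i m : ℕ}

theorem twoSidedBetti_add_eq_eta (hm : m = 2 * b + c + 3) (hi : i ≤ c) :
    twoSidedBetti b c i + (b + c + 1).choose (b + i + 1) * (b + i).choose b =
      eta (2 * b + 1) m (i + 1) + eta (2 * b + 1) m (m - (2 * b + 1) - (i + 1)) := by
  have hb : (2 * b + 1) / 2 = b := by omega
  have hm' : m - b - 2 = b + c + 1 := by omega
  have hj : m - (2 * b + 1) - (i + 1) = c + 1 - i := by omega
  have hj' : b + (c + 1 - i) = b + c + 1 - i := by omega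
  have hj'' : b + c + 1 - i - 1 = b + c - i := by omega
  rw [twoSidedBetti_of_le hi, eta, eta, if_pos (by omega), if_pos (by omega), hb, hm', hj, hj',
    hj'', Nat.choose_symm (by omega), add_comm]
  rfl

theorem twoSidedBetti_top_add (b c : ℕ) : twoSidedBetti b c (c + 1) +
    (b + c + 1).choose (b + (c + 1) + 1) * (b + (c + 1)).choose b = 1 := by
  rw [twoSidedBetti_top, Nat.choose_eq_zero_of_lt (by omega), zero_mul, add_zero]

theorem twoSidedBetti_add_of_lt (hi : c + 1 < i) :
    twoSidedBetti b c i + (b + c + 1).choose (b + i + 1) * (b + i).choose b = 0 := by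
  rw [twoSidedBetti_of_lt hi, Nat.choose_eq_zero_of_lt (by omega), zero_mul, add_zero]

end Eta

section CyclicModuleBetti

variable (k : Type) [Field k] {b c s : ℕ}

/-- The module of `betti_cyclic_odd` for `d = 2b + 3` and `m = s + 2`. -/
noncomputable abbrev CyclicModule (b s : ℕ) : ModuleCat (MvPolynomial (Fin (s + 2)) k) :=
  ModuleCat.of _ (_ ⧸ (idealI k (s + 2) (b + 2) 2 (s + 1) +
    Ideal.span {Xv k (s + 2) 1 * Xv k (s + 2) (s + 2)} * idealI k (s + 2) (b + 1) 3 s))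

theorem betti_zero_cyclicModule (hs : s = 2 * (b + 1) + c + 1) :
    betti k (s + 2) (CyclicModule k b s) 0 = 1 := by
  rw [CyclicModule, idealI_add_eq_monomialIdeal, ← Nat.cast_one]
  exact betti_eq_of_extBetti_eq (extBetti_zero_cyclic hs)

theorem betti_succ_cyclicModule (hs : s = 2 * (b + 1) + c + 1) (i : ℕ) :
    betti k (s + 2) (CyclicModule k b s) (i + 1) = (twoSidedBetti (b + 1) c i +
      (b + 1 + c + 1).choose (b + 1 + i + 1) * (b + 1 + i).choose (b + 1) : ℕ) := by
  rw [CyclicModule, idealI_add_eq_monomialIdeal]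
  exact betti_eq_of_extBetti_eq (extBetti_succ_cyclic hs i)

end CyclicModuleBetti

end CyclicBetti

/-- Betti numbers of `k[Δ(d,m)]` for `d ≥ 3` odd, `d + 1 < m`, `a = (d+1)/2` (Terai–Hibi):
for `M = k[x_1,…,x_m]/(I_{a,2,m−1} + x_1x_m·I_{a−1,3,m−2})` one has `b_0(M) = 1`,
`b_{m−d}(M) = 1`, `b_i(M) = 0` for `i > m−d`, and `b_i(M) = η(d, m, i) + η(d, m, m−d−i)`
for `1 ≤ i ≤ m−d−1`. -/
theorem betti_cyclic_odd (k : Type) [Field k] (d m : ℕ)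
    (hd : Odd d) (hd3 : 3 ≤ d) (hm : d + 1 < m) (a : ℕ) (ha : a = (d + 1) / 2)
    (M : ModuleCat (MvPolynomial (Fin m) k))
    (hM : M = ModuleCat.of (MvPolynomial (Fin m) k)
      (MvPolynomial (Fin m) k ⧸ (idealI k m a 2 (m - 1) +
        Ideal.span {Xv k m 1 * Xv k m m} * idealI k m (a - 1) 3 (m - 2)))) :
    betti k m M 0 = 1 ∧
    betti k m M (m - d) = 1 ∧
    (∀ i, m - d < i → betti k m M i = 0) ∧
    (∀ i, 1 ≤ i → i ≤ m - d - 1 →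
      betti k m M i = ((eta d m i + eta d m (m - d - i) : ℕ) : Cardinal)) := by
  obtain ⟨b, rfl⟩ : ∃ b, d = 2 * (b + 1) + 1 := by
    obtain ⟨b, rfl⟩ := hd
    exact ⟨b - 1, by omega⟩
  obtain ⟨c, hc⟩ : ∃ c, m = 2 * (b + 1) + c + 3 := ⟨m - (2 * b + 5), by omega⟩
  obtain ⟨s, rfl⟩ : ∃ s, m = s + 2 := ⟨m - 2, by omega⟩
  obtain rfl : a = b + 2 := by omega
  have hs : s = 2 * (b + 1) + c + 1 := by omega
  have hd' : s + 2 - (2 * (b + 1) + 1) = c + 1 + 1 := by omega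
  subst hM
  refine ⟨CyclicBetti.betti_zero_cyclicModule k hs, ?_, fun i hi => ?_, fun i hi hi' => ?_⟩
  · rw [hd']
    exact (CyclicBetti.betti_succ_cyclicModule k hs (c + 1)).trans
      (Nat.cast_eq_one.mpr (CyclicBetti.twoSidedBetti_top_add (b + 1) c))
  · obtain ⟨i, rfl⟩ := Nat.exists_eq_add_one_of_ne_zero (Nat.ne_zero_of_lt hi)
    exact (CyclicBetti.betti_succ_cyclicModule k hs i).trans
      (Nat.cast_eq_zero.mpr (CyclicBetti.twoSidedBetti_add_of_lt (by omega)))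
  · obtain ⟨i, rfl⟩ := Nat.exists_eq_add_of_le' hi
    exact (CyclicBetti.betti_succ_cyclicModule k hs i).trans
      (congrArg _ (CyclicBetti.twoSidedBetti_add_eq_eta hc (by omega)))
end

section
/- Let k be a field, d an odd integer with d ≥ 3, and m an integer with d+1 < m; set a = (d+1)/2. Let M = k[x_1,…,x_m]/(I_{a,2,m−1} + x_1x_m·I_{a−1,3,m−2}) (the Stanley–Reisner ring k[Δ(d,m)]) and N = k[x_1,…,x_{m−1}]/(I_{a,1,m−2} + I_{a,2,m−1}) (the Stanley–Reisner ring k[Δ(d−1,m−1)]). Then for every i ≥ 0, the i-th Betti number of M over k[x_1,…,x_m] equals the i-th Betti number of N over k[x_1,…,x_{m−1}]: dim_k Tor_i^{k[x_1,…,x_m]}(k, M) = dim_k Tor_i^{k[x_1,…,x_{m−1}]}(k, N). -/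
open CategoryTheory

set_option synthInstance.maxHeartbeats 1000000
set_option maxHeartbeats 1000000

/-!
Splitting the variable `x_1` into `x_1 x_m` is a homomorphism
`φ : k[x_1, …, x_{m-1}] → k[x_1, …, x_m]`, under which `k[x_1, …, x_m]` is free with basis the
monomials `x_1 ^ i` and `x_m ^ j`; in particular `φ` is flat, and it respects the evaluation at `0`.
Flat base change for `Tor` hence shows that `k[x_1, …, x_{m-1}] ⧸ J` and
`k[x_1, …, x_m] ⧸ φ(J)k[x_1, …, x_m]` have the same Betti numbers.
Sorting the generators by whether `x_1` divides them, the ideal `I_{a,1,m-2} + I_{a,2,m-1}` equals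
`I_{a,2,m-1} + x_1 I_{a-1,3,m-2}`, and `φ` extends it to `I_{a,2,m-1} + x_1 x_m I_{a-1,3,m-2}`.
-/

section LeftDerived

variable {C D E : Type*} [Category* C] [Category* D] [Category* E]
  [Abelian C] [Abelian D] [Abelian E] [HasProjectiveResolutions C]

/-- If `F` preserves homology and projective objects, then `Lₙ(F ⋙ G) X ≅ Lₙ G (F X)`, since `F`
carries projective resolutions to projective resolutions. -/
noncomputable def leftDerivedPrecompObjIso [HasProjectiveResolutions D] (F : C ⥤ D) (G : D ⥤ E)
    [F.Additive] [G.Additive] [F.PreservesHomology]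
    [F.PreservesProjectiveObjects] (n : ℕ) (X : C) :
    ((F ⋙ G).leftDerived n).obj X ≅ (G.leftDerived n).obj (F.obj X) :=
  let P := projectiveResolution X
  P.isoLeftDerivedObj (F ⋙ G) n ≪≫
    ((F.mapProjectiveResolution P).isoLeftDerivedObj G n).symm

/-- If `H` preserves homology, then `Lₙ(G ⋙ H) X ≅ H (Lₙ G X)`. -/
noncomputable def leftDerivedPostcompObjIso (G : C ⥤ D) (H : D ⥤ E) [G.Additive] [H.Additive]
    [H.PreservesHomology] (n : ℕ) (X : C) :
    ((G ⋙ H).leftDerived n).obj X ≅ H.obj ((G.leftDerived n).obj X) :=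
  let P := projectiveResolution X
  P.isoLeftDerivedObj (G ⋙ H) n ≪≫
    ShortComplex.mapHomologyIso (((G.mapHomologicalComplex _).obj P.complex).sc n) H ≪≫
    H.mapIso (P.isoLeftDerivedObj G n).symm

/-- The isomorphism of left derived functors induced by an isomorphism of additive functors. -/
noncomputable def leftDerivedMapIso {F G : C ⥤ D} [F.Additive] [G.Additive] (α : F ≅ G) (n : ℕ) :
    F.leftDerived n ≅ G.leftDerived n where
  hom := NatTrans.leftDerived α.hom n
  inv := NatTrans.leftDerived α.inv n
  hom_inv_id := by rw [← NatTrans.leftDerived_comp, α.hom_inv_id, NatTrans.leftDerived_id]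
  inv_hom_id := by rw [← NatTrans.leftDerived_comp, α.inv_hom_id, NatTrans.leftDerived_id]

end LeftDerived

section BaseChange

open Limits MonoidalCategory

universe u

variable {S R : Type u} [CommRing S] [CommRing R] (f : S →+* R)

/-- The natural isomorphism `A ⊗[R] (R ⊗[S] N) ≅ A ⊗[S] N` of `S`-modules, for an `R`-module `A` and
varying `S`-modules `N`. -/
noncomputable def extendScalarsTensoringLeftIso (A : ModuleCat.{u} R) :
    ModuleCat.extendScalars.{u, u, u} f ⋙ (tensoringLeft (ModuleCat R)).obj A ⋙
        ModuleCat.restrictScalars f ≅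
      (tensoringLeft (ModuleCat S)).obj ((ModuleCat.restrictScalars f).obj A) :=
  letI : Algebra S R := f.toAlgebra
  letI : Module S A := Module.compHom A f
  haveI : IsScalarTower S R A := ⟨fun s r a ↦ mul_smul (f s) r a⟩
  NatIso.ofComponents
    (fun N ↦ LinearEquiv.toModuleIso
      (X₁ := (ModuleCat.restrictScalars f).obj
        (((tensoringLeft _).obj A).obj ((ModuleCat.extendScalars f).obj N)))
      (X₂ := ((tensoringLeft _).obj ((ModuleCat.restrictScalars f).obj A)).obj N)
      ((TensorProduct.AlgebraTensorModule.cancelBaseChange S R R A N).restrictScalars S))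
    (fun g ↦ ModuleCat.hom_ext <| LinearMap.ext fun x ↦ (LinearMap.congr_fun
      (TensorProduct.AlgebraTensorModule.lTensor_comp_cancelBaseChange S R R (M := A) g.hom)
      x).symm)

/-- Flat base change: `Torₙᴿ(A, R ⊗[S] N) ≅ Torₙˢ(A, N)` as `S`-modules. -/
noncomputable def restrictScalarsTorIso (hf : f.Flat) (A : ModuleCat.{u} R) (N : ModuleCat.{u} S)
    (n : ℕ) :
    (ModuleCat.restrictScalars f).obj
        (((Tor (ModuleCat R) n).obj A).obj ((ModuleCat.extendScalars f).obj N)) ≅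
      ((Tor (ModuleCat S) n).obj ((ModuleCat.restrictScalars f).obj A)).obj N :=
  let F := ModuleCat.extendScalars.{u, u, u} f
  let adj : F ⊣ ModuleCat.restrictScalars f := ModuleCat.extendRestrictScalarsAdj f
  let T := (tensoringLeft (ModuleCat R)).obj A
  haveI : F.IsLeftAdjoint := adj.isLeftAdjoint
  haveI : PreservesFiniteLimits F := ModuleCat.preservesFiniteLimits_extendScalars_of_flat hf
  haveI : F.Additive := Functor.additive_of_preserves_binary_products F
  haveI : F.PreservesProjectiveObjects := ⟨fun hP ↦ adj.map_projective _ hP⟩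
  (leftDerivedPostcompObjIso T (ModuleCat.restrictScalars f) n (F.obj N)).symm ≪≫
    (leftDerivedPrecompObjIso F (T ⋙ ModuleCat.restrictScalars f) n N).symm ≪≫
    (leftDerivedMapIso (extendScalarsTensoringLeftIso f A) n).app N

/-- If `S → R ⧸ I` is surjective with kernel `J`, then `R ⧸ I ≅ S ⧸ J` as `S`-modules. -/
noncomputable def restrictScalarsQuotientIso {I : Ideal R} {J : Ideal S} (hJ : J = I.comap f)
    (h : Function.Surjective ((Ideal.Quotient.mk I).comp f)) :
    (ModuleCat.restrictScalars f).obj (ModuleCat.of R (R ⧸ I)) ≅ ModuleCat.of S (S ⧸ J) :=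
  letI : Algebra S R := f.toAlgebra
  haveI hker : J = LinearMap.ker (Algebra.linearMap S (R ⧸ I)) := by
    ext x
    rw [hJ]
    exact (Ideal.Quotient.eq_zero_iff_mem (I := I)).symm
  (LinearEquiv.toModuleIso (X₂ := (ModuleCat.restrictScalars f).obj (ModuleCat.of R (R ⧸ I)))
    ((Submodule.quotEquivOfEq _ _ hker).trans
      ((Algebra.linearMap S (R ⧸ I)).quotKerEquivOfSurjective h))).symm

/-- The isomorphism `R ⊗[S] (S ⧸ J) ≅ R ⧸ JR` of `R`-modules. -/
noncomputable def extendScalarsQuotientIso (J : Ideal S) :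
    (ModuleCat.extendScalars.{u, u, u} f).obj (ModuleCat.of S (S ⧸ J)) ≅
      ModuleCat.of R (R ⧸ J.map f) :=
  letI : Algebra S R := f.toAlgebra
  (LinearEquiv.toModuleIso (X₂ := (ModuleCat.extendScalars.{u, u, u} f).obj
    (ModuleCat.of S (S ⧸ J))) (Ideal.qoutMapEquivTensorQout R (I := J))).symm

end BaseChange

section Rank

universe v

variable {K S : Type*} [CommRing K] [CommRing S] [Algebra K S]

attribute [local instance] RestrictScalars.moduleOrig in
theorem rank_restrictScalars_congr {M N : Type v} [AddCommGroup M] [AddCommGroup N] [Module S M]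
    [Module S N] (e : M ≃ₗ[S] N) :
    Module.rank K (RestrictScalars K S M) = Module.rank K (RestrictScalars K S N) :=
  LinearEquiv.rank_eq <| LinearEquiv.restrictScalars K <|
    show RestrictScalars K S M ≃ₗ[S] RestrictScalars K S N from e

theorem rank_restrictScalars_algHom {R : Type*} [CommRing R] [Algebra K R] (f : S →ₐ[K] R)
    (M : ModuleCat R) :
    Module.rank K (RestrictScalars K S ((ModuleCat.restrictScalars f.toRingHom).obj M)) =
      Module.rank K (RestrictScalars K R M) :=
  LinearEquiv.rank_eq
    { AddEquiv.refl M with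
      map_smul' := fun c x ↦ congr_arg (fun r : R ↦ r • (show M from x)) (f.commutes c) }

end Rank

section ConstantCoeff

open MvPolynomial

theorem ker_constantCoeff_eq_idealOfVars (σ K : Type*) [CommSemiring K] :
    RingHom.ker (constantCoeff : MvPolynomial σ K →+* K) = idealOfVars σ K := by
  ext x
  rw [RingHom.mem_ker, ← pow_one (idealOfVars σ K), mem_pow_idealOfVars_iff',
    constantCoeff_eq]
  simp only [Nat.lt_one_iff, Finsupp.degree_eq_zero_iff, forall_eq]

theorem constantCoeff_comp_algHom {σ τ K : Type*} [CommSemiring K]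
    (φ : MvPolynomial σ K →ₐ[K] MvPolynomial τ K) (h : ∀ i, constantCoeff (φ (X i)) = 0) :
    constantCoeff.comp φ.toRingHom = constantCoeff := by
  ext i
  · simp
  · simp [h]

end ConstantCoeff

section Betti

open MvPolynomial

theorem maxIdl_eq_ker_constantCoeff (k : Type) [Field k] (n : ℕ) :
    maxIdl k n = RingHom.ker (constantCoeff (R := k)) :=
  (ker_constantCoeff_eq_idealOfVars (Fin n) k).symm

variable {k : Type} [Field k] {n m : ℕ} (φ : MvPolynomial (Fin n) k →ₐ[k] MvPolynomial (Fin m) k)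

theorem maxIdl_eq_comap (h : ∀ i, constantCoeff (φ (X i)) = 0) :
    maxIdl k n = (maxIdl k m).comap φ.toRingHom := by
  rw [maxIdl_eq_ker_constantCoeff, maxIdl_eq_ker_constantCoeff, RingHom.comap_ker,
    constantCoeff_comp_algHom φ h]

theorem surjective_mk_maxIdl_comp :
    Function.Surjective ((Ideal.Quotient.mk (maxIdl k m)).comp φ.toRingHom) := by
  intro x
  obtain ⟨r, rfl⟩ := Ideal.Quotient.mk_surjective x
  refine ⟨C (constantCoeff r), Ideal.Quotient.eq.2 ?_⟩
  rw [maxIdl_eq_ker_constantCoeff, RingHom.mem_ker]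
  simp

/-- The isomorphism of `k[x_1, …, x_n]`-modules identifying the residue fields of `k[x_1, …, x_m]`
and `k[x_1, …, x_n]` at the origin. -/
noncomputable def restrictScalarsResidueFieldIso (h : ∀ i, constantCoeff (φ (X i)) = 0) :
    (ModuleCat.restrictScalars φ.toRingHom).obj
        (ModuleCat.of _ (MvPolynomial (Fin m) k ⧸ maxIdl k m)) ≅
      ModuleCat.of _ (MvPolynomial (Fin n) k ⧸ maxIdl k n) :=
  restrictScalarsQuotientIso φ.toRingHom (maxIdl_eq_comap φ h) (surjective_mk_maxIdl_comp φ)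

theorem betti_congr {M N : ModuleCat (MvPolynomial (Fin n) k)} (e : M ≅ N) (i : ℕ) :
    betti k n M i = betti k n N i :=
  rank_restrictScalars_congr (((Tor _ i).obj _).mapIso e).toLinearEquiv

theorem betti_extendScalars (hφ : φ.toRingHom.Flat) (h : ∀ i, constantCoeff (φ (X i)) = 0)
    (N : ModuleCat (MvPolynomial (Fin n) k)) (i : ℕ) :
    betti k m ((ModuleCat.extendScalars φ.toRingHom).obj N) i = betti k n N i :=
  (rank_restrictScalars_algHom φ _).symm.trans <| rank_restrictScalars_congr <|
    (restrictScalarsTorIso φ.toRingHom hφ _ N i ≪≫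
      ((Tor _ i).mapIso (restrictScalarsResidueFieldIso φ h)).app N).toLinearEquiv

theorem betti_quotient_map (hφ : φ.toRingHom.Flat) (h : ∀ i, constantCoeff (φ (X i)) = 0)
    (J : Ideal (MvPolynomial (Fin n) k)) (i : ℕ) :
    betti k m (ModuleCat.of _ (MvPolynomial (Fin m) k ⧸ J.map φ.toRingHom)) i =
      betti k n (ModuleCat.of _ (MvPolynomial (Fin n) k ⧸ J)) i := by
  rw [← betti_extendScalars φ hφ h]
  exact betti_congr (extendScalarsQuotientIso φ.toRingHom J).symm i

end Betti

theorem free_of_smul_eq_basis {K S A ι κ μ : Type*} [Semiring K] [Semiring S] [AddCommMonoid A]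
    [Module K S] [Module K A] [Module S A] [IsScalarTower K S A]
    (bS : Module.Basis κ K S) (bA : Module.Basis μ K A) (v : ι → A) (e : ι × κ ≃ μ)
    (h : ∀ i j, bS j • v i = bA (e (i, j))) : Module.Free S A := by
  let L : (ι →₀ S) →ₗ[S] A := Finsupp.linearCombination S v
  let E : (ι →₀ S) ≃ₗ[K] A :=
    (Finsupp.basis fun _ ↦ bS).equiv bA ((Equiv.sigmaEquivProd ι κ).trans e)
  have hLE : L.restrictScalars K = E.toLinearMap := by
    refine (Finsupp.basis fun _ ↦ bS).ext fun ⟨i, j⟩ ↦ ?_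
    rw [LinearEquiv.coe_coe, Module.Basis.equiv_apply]
    simp [L, h]
  have hL : Function.Bijective L := by
    have : ⇑L = ⇑E := funext (LinearMap.congr_fun hLE)
    exact this ▸ E.bijective
  exact .of_equiv (LinearEquiv.ofBijective L hL)

section Split

open MvPolynomial

section Option

variable {σ : Type*} [DecidableEq σ]

/-- The homomorphism splitting the variable `x_s` into the product of `x_s` and a new variable,
which is indexed by `none`. -/
noncomputable def splitVar (K : Type*) [CommSemiring K] (s : σ) :
    MvPolynomial σ K →ₐ[K] MvPolynomial (Option σ) K :=
  aeval fun i ↦ if i = s then X (some i) * X none else X (some i)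

theorem splitVar_X_self (K : Type*) [CommSemiring K] (s : σ) :
    splitVar K s (X s) = X (some s) * X none := by
  simp [splitVar]

theorem splitVar_X_of_ne (K : Type*) [CommSemiring K] {s i : σ} (h : i ≠ s) :
    splitVar K s (X i) = X (some i) := by
  simp [splitVar, h]

theorem splitVar_monomial (K : Type*) [CommSemiring K] (s : σ) (m : σ →₀ ℕ) :
    splitVar K s (monomial m 1) = monomial (m.optionElim (m s)) 1 := by
  induction m using Finsupp.induction_linear with
  | zero => simp
  | add m m' h h' =>
    rw [← one_mul (1 : K), ← monomial_mul, map_mul, h, h', monomial_mul]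
    congr 2
    ext (_ | i) <;> simp
  | single i n =>
    rw [← X_pow_eq_monomial, map_pow]
    obtain rfl | hi := eq_or_ne i s
    · rw [splitVar_X_self, mul_pow, X_pow_eq_monomial, X_pow_eq_monomial, monomial_mul, one_mul]
      congr 2
      ext (_ | j)
      · simp
      · simp [Finsupp.single_apply]
    · rw [splitVar_X_of_ne K hi, X_pow_eq_monomial]
      congr 2
      ext (_ | j)
      · simp [hi]
      · simp [Finsupp.single_apply]

/-- Every monomial of `K[Option σ]` is uniquely the image under `splitVar` of a monomial `m` of
`K[σ]` times a power of `x_s` or of the new variable. The pair `(z, m)` encodes the exponent of this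
product, where `z ≥ 0` stands for `x_s ^ z` and `z ≤ 0` for the `(-z)`-th power of the new
variable. -/
noncomputable def splitExponentEquiv (s : σ) : ℤ × (σ →₀ ℕ) ≃ (Option σ →₀ ℕ) where
  toFun p := (p.2 + .single s p.1.toNat).optionElim (p.2 s + (-p.1).toNat)
  invFun t := (t (some s) - t none, t.some.update s (min (t (some s)) (t none)))
  left_inv := by
    rintro ⟨z, m⟩
    ext i
    · simp
    · obtain rfl | hi := eq_or_ne i s
      · simp only [Finsupp.optionElim_add, Finsupp.some_add, Finsupp.some_optionElim,
          Finsupp.coe_add, Pi.add_apply, Finsupp.optionElim_apply_eq_elim, Option.elim_some,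
          Finsupp.single_eq_same, Option.elim_none, Finsupp.coe_update, Function.update_self]
        omega
      · simp [hi]
  right_inv t := by
    ext (_ | i)
    · simp only [Finsupp.coe_update, Function.update_self, neg_sub,
        Finsupp.optionElim_apply_eq_elim, Option.elim_none]
      omega
    · obtain rfl | hi := eq_or_ne i s
      · simp only [Finsupp.optionElim_apply_eq_elim, Option.elim_some, Finsupp.coe_add,
          Pi.add_apply, Finsupp.coe_update, Function.update_self, Finsupp.single_eq_same]
        omega
      · simp [hi]

theorem splitVar_flat (K : Type*) [CommRing K] (s : σ) : (splitVar K s).toRingHom.Flat := by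
  algebraize [(splitVar K s).toRingHom]
  have : IsScalarTower K (MvPolynomial σ K) (MvPolynomial (Option σ) K) :=
    .of_algebraMap_eq fun r ↦ ((splitVar K s).commutes r).symm
  let v (z : ℤ) : MvPolynomial (Option σ) K :=
    monomial (.single (some s) z.toNat + .single none (-z).toNat) 1
  have smul_v (z : ℤ) (m : σ →₀ ℕ) : basisMonomials σ K m • v z =
      basisMonomials (Option σ) K (splitExponentEquiv s (z, m)) := by
    rw [Algebra.smul_def, RingHom.algebraMap_toAlgebra]
    simp only [coe_basisMonomials]
    refine (congr_arg (· * v z) (splitVar_monomial K s m)).trans ?_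
    rw [monomial_mul, one_mul]
    congr 2
    ext (_ | i) <;> simp [splitExponentEquiv, Finsupp.single_apply]
  have : Module.Free (MvPolynomial σ K) (MvPolynomial (Option σ) K) :=
    free_of_smul_eq_basis _ _ v _ smul_v
  exact inferInstanceAs (Module.Flat _ _)

end Option

section Fin

variable {n : ℕ}

/-- The homomorphism `splitVar` on `K[x_1, …, x_n]`, with the new variable placed last. -/
noncomputable def splitVarLast (K : Type*) [CommSemiring K] (s : Fin n) :
    MvPolynomial (Fin n) K →ₐ[K] MvPolynomial (Fin (n + 1)) K :=
  (renameEquiv K finSuccEquivLast.symm).toAlgHom.comp (splitVar K s)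

theorem splitVarLast_X_self (K : Type*) [CommSemiring K] (s : Fin n) :
    splitVarLast K s (X s) = X s.castSucc * X (Fin.last n) := by
  simp [splitVarLast, splitVar_X_self]

theorem splitVarLast_X_of_ne (K : Type*) [CommSemiring K] {s i : Fin n} (h : i ≠ s) :
    splitVarLast K s (X i) = X i.castSucc := by
  simp [splitVarLast, splitVar_X_of_ne K h]

theorem constantCoeff_splitVarLast_X (K : Type*) [CommSemiring K] (s i : Fin n) :
    constantCoeff (splitVarLast K s (X i)) = 0 := by
  obtain rfl | h := eq_or_ne i s
  · simp [splitVarLast_X_self]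
  · simp [splitVarLast_X_of_ne K h]

theorem splitVarLast_flat (K : Type*) [CommRing K] (s : Fin n) :
    (splitVarLast K s).toRingHom.Flat :=
  (splitVar_flat K s).comp (.of_bijective (renameEquiv K finSuccEquivLast.symm).bijective)

end Fin

end Split

section idealI

variable {k : Type*} [Field k] {n a p q : ℕ}

theorem prod_Xv_mem_idealI {t : ℕ → ℕ} (hp : p ≤ t 0) (hq : t (a - 1) ≤ q)
    (ht : ∀ j, j + 1 < a → t j + 2 ≤ t (j + 1)) :
    ∏ j ∈ Finset.range a, Xv k n (t j) ∈ idealI k n a p q :=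
  Ideal.subset_span ⟨t, hp, hq, ht, rfl⟩

theorem idealI_le_iff {I : Ideal (MvPolynomial (Fin n) k)} :
    idealI k n a p q ≤ I ↔ ∀ t : ℕ → ℕ, p ≤ t 0 → t (a - 1) ≤ q →
      (∀ j, j + 1 < a → t j + 2 ≤ t (j + 1)) → ∏ j ∈ Finset.range a, Xv k n (t j) ∈ I := by
  rw [idealI, Ideal.span_le]
  exact ⟨fun h t hp hq ht ↦ h ⟨t, hp, hq, ht, rfl⟩,
    fun h _ ⟨t, hp, hq, ht, hf⟩ ↦ hf ▸ h t hp hq ht⟩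

theorem idealI_mono {p' q' : ℕ} (hp : p' ≤ p) (hq : q ≤ q') :
    idealI k n a p q ≤ idealI k n a p' q' :=
  idealI_le_iff.2 fun _ htp htq ht ↦ prod_Xv_mem_idealI (hp.trans htp) (htq.trans hq) ht

theorem mem_Icc_of_gaps {t : ℕ → ℕ} (hp : p ≤ t 0) (hq : t (a - 1) ≤ q)
    (ht : ∀ j, j + 1 < a → t j + 2 ≤ t (j + 1)) {j : ℕ} (hj : j < a) : t j ∈ Set.Icc p q := by
  have hmono : MonotoneOn t (Set.Iio a) := monotoneOn_of_le_succ Set.ordConnected_Iio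
    fun j _ _ hj' ↦ (Nat.le_add_right _ 2).trans (ht j hj')
  exact ⟨hp.trans (hmono (Set.mem_Iio.2 (by omega)) hj j.zero_le),
    (hmono hj (Set.mem_Iio.2 (by omega)) (by omega)).trans hq⟩

theorem map_idealI {m : ℕ} (φ : MvPolynomial (Fin n) k →+* MvPolynomial (Fin m) k)
    (hφ : ∀ t ∈ Set.Icc p q, φ (Xv k n t) = Xv k m t) :
    (idealI k n a p q).map φ = idealI k m a p q := by
  have map_prod_Xv {t : ℕ → ℕ} (hp : p ≤ t 0) (hq : t (a - 1) ≤ q)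
      (ht : ∀ j, j + 1 < a → t j + 2 ≤ t (j + 1)) :
      φ (∏ j ∈ Finset.range a, Xv k n (t j)) = ∏ j ∈ Finset.range a, Xv k m (t j) := by
    rw [map_prod]
    exact Finset.prod_congr rfl fun j hj ↦ hφ _ (mem_Icc_of_gaps hp hq ht (Finset.mem_range.1 hj))
  apply le_antisymm
  · rw [Ideal.map_le_iff_le_comap, idealI_le_iff]
    intro t hp hq ht
    rw [Ideal.mem_comap, map_prod_Xv hp hq ht]
    exact prod_Xv_mem_idealI hp hq ht
  · rw [idealI_le_iff]
    intro t hp hq ht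
    rw [← map_prod_Xv hp hq ht]
    exact Ideal.mem_map_of_mem φ (prod_Xv_mem_idealI hp hq ht)

theorem idealI_succ (ha : 1 ≤ a) :
    idealI k n (a + 1) p q =
      idealI k n (a + 1) (p + 1) q ⊔ Ideal.span {Xv k n p} * idealI k n a (p + 2) q := by
  apply le_antisymm
  · rw [idealI_le_iff]
    intro t hp hq ht
    obtain rfl | hp := hp.eq_or_lt
    · have h_tail := prod_Xv_mem_idealI (k := k) (n := n) (a := a) (q := q) (t := fun j ↦ t (j + 1))
        (ht 0 (by omega)) (by rwa [Nat.sub_add_cancel ha]) fun j hj ↦ ht (j + 1) (by omega)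
      rw [Finset.prod_range_succ', mul_comm _ (Xv k n (t 0))]
      exact Ideal.mem_sup_right (Ideal.mul_mem_mul (Ideal.mem_span_singleton_self _) h_tail)
    · exact Ideal.mem_sup_left (prod_Xv_mem_idealI hp hq ht)
  · refine sup_le (idealI_mono p.le_succ le_rfl) ?_
    conv_lhs => rw [idealI, Ideal.span_mul_span']
    rw [Ideal.span_le]
    rintro _ ⟨_, rfl, _, ⟨t, hp, hq, ht, rfl⟩, rfl⟩
    let t' : ℕ → ℕ
      | 0 => p
      | j + 1 => t j
    have ht'q : t' (a + 1 - 1) ≤ q := by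
      obtain ⟨b, rfl⟩ := Nat.exists_eq_add_of_le' ha
      exact hq
    have ht' : ∀ j, j + 1 < a + 1 → t' j + 2 ≤ t' (j + 1)
      | 0, _ => hp
      | j + 1, hj => ht j (by omega)
    have h_mem := prod_Xv_mem_idealI (k := k) (n := n) (p := p) (t := t') le_rfl ht'q ht'
    rwa [Finset.prod_range_succ', mul_comm] at h_mem

theorem idealI_sup_idealI_succ (ha : 1 ≤ a) :
    idealI k n (a + 1) p q ⊔ idealI k n (a + 1) (p + 1) (q + 1) =
      idealI k n (a + 1) (p + 1) (q + 1) ⊔ Ideal.span {Xv k n p} * idealI k n a (p + 2) q := by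
  rw [idealI_succ ha, sup_right_comm, sup_eq_right.2 (idealI_mono le_rfl q.le_succ)]

end idealI

section Xv

variable (k : Type*) [Field k] {n : ℕ}

theorem Xv_val_add_one (i : Fin n) : Xv k n (i + 1) = MvPolynomial.X i := by
  simp [Xv, i.is_lt]

theorem splitVarLast_Xv_self (s : Fin n) :
    splitVarLast k s (Xv k n (s + 1)) = Xv k (n + 1) (s + 1) * Xv k (n + 1) (n + 1) := by
  rw [Xv_val_add_one, splitVarLast_X_self, ← Xv_val_add_one, ← Xv_val_add_one, Fin.val_castSucc,
    Fin.val_last]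

theorem splitVarLast_Xv_of_ne {s : Fin n} {t : ℕ} (ht : t ∈ Set.Icc 1 n) (hts : t ≠ s + 1) :
    splitVarLast k s (Xv k n t) = Xv k (n + 1) t := by
  obtain ⟨i, rfl⟩ : ∃ i : Fin n, t = i + 1 := ⟨⟨t - 1, by grind⟩, by grind⟩
  rw [Xv_val_add_one, splitVarLast_X_of_ne k (by grind), ← Xv_val_add_one, Fin.val_castSucc]

theorem map_splitVarLast_idealI_sup {a : ℕ} (ha : 1 ≤ a) :
    (idealI k (n + 1) (a + 1) 1 n ⊔ idealI k (n + 1) (a + 1) 2 (n + 1)).map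
        (splitVarLast k (0 : Fin (n + 1))).toRingHom =
      idealI k (n + 2) (a + 1) 2 (n + 1) ⊔
        Ideal.span {Xv k (n + 2) 1 * Xv k (n + 2) (n + 2)} * idealI k (n + 2) a 3 n := by
  have map_Xv_one : (splitVarLast k (0 : Fin (n + 1))).toRingHom (Xv k (n + 1) 1) =
      Xv k (n + 2) 1 * Xv k (n + 2) (n + 2) := splitVarLast_Xv_self k 0
  have map_Xv {t : ℕ} (h2 : 2 ≤ t) (hn : t ≤ n + 1) :
      (splitVarLast k (0 : Fin (n + 1))).toRingHom (Xv k (n + 1) t) = Xv k (n + 2) t :=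
    splitVarLast_Xv_of_ne k ⟨by omega, hn⟩ (by grind)
  rw [idealI_sup_idealI_succ ha, Ideal.map_sup, Ideal.map_mul, Ideal.map_span,
    Set.image_singleton, map_Xv_one, map_idealI _ fun t ht ↦ map_Xv ht.1 ht.2,
    map_idealI _ fun t ht ↦ map_Xv (by grind) (by grind)]

end Xv

/-- For `d ≥ 3` odd, `d + 1 < m`, `a = (d+1)/2`: the total Betti numbers of
`M = k[Δ(d,m)] = k[x_1,…,x_m]/(I_{a,2,m−1} + x_1x_m·I_{a−1,3,m−2})` over `k[x_1,…,x_m]`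
coincide with those of `N = k[Δ(d−1,m−1)] = k[x_1,…,x_{m−1}]/(I_{a,1,m−2} + I_{a,2,m−1})`
over `k[x_1,…,x_{m−1}]`. -/
theorem betti_odd_eq_betti_even (k : Type) [Field k] (d m : ℕ)
    (hd : Odd d) (hd3 : 3 ≤ d) (hm : d + 1 < m) (a : ℕ) (ha : a = (d + 1) / 2)
    (M : ModuleCat (MvPolynomial (Fin m) k))
    (hM : M = ModuleCat.of (MvPolynomial (Fin m) k)
      (MvPolynomial (Fin m) k ⧸ (idealI k m a 2 (m - 1) +
        Ideal.span {Xv k m 1 * Xv k m m} * idealI k m (a - 1) 3 (m - 2))))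
    (N : ModuleCat (MvPolynomial (Fin (m - 1)) k))
    (hN : N = ModuleCat.of (MvPolynomial (Fin (m - 1)) k)
      (MvPolynomial (Fin (m - 1)) k ⧸
        (idealI k (m - 1) a 1 (m - 2) + idealI k (m - 1) a 2 (m - 1)))) :
    ∀ i, betti k m M i = betti k (m - 1) N i := by
  intro i
  obtain ⟨n, rfl⟩ : ∃ n, m = n + 2 := ⟨m - 2, by omega⟩
  obtain ⟨b, rfl⟩ : ∃ b, a = b + 1 := ⟨a - 1, by omega⟩
  have hb : 1 ≤ b := by omega
  have h_betti := betti_quotient_map (splitVarLast k (0 : Fin (n + 1))) (splitVarLast_flat k 0)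
    (constantCoeff_splitVarLast_X k 0)
    (idealI k (n + 1) (b + 1) 1 n ⊔ idealI k (n + 1) (b + 1) 2 (n + 1)) i
  rw [map_splitVarLast_idealI_sup k hb] at h_betti
  rw [hM, hN]
  exact h_betti
end
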